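/- Let (X, ‖·‖) be a real Banach space. The following conditions are equivalent: (i) the dual unit ball (B_{X*}, w*) is a Corson compact; (ii) for every norm |||·||| on X equivalent to ‖·‖, the Banach space (X, |||·|||) has a 1-projectional skeleton; (iii) for every norm |||·||| on X equivalent to ‖·‖, the dual unit ball of (X, |||·|||), equipped with the weak* topology, has a retractional skeleton. -/

import Mathlib

/-!
(i) ⇒ (ii). If the dual ball embeds into a `Σ`-product, then so does the dual ball of every
equivalent norm `N`. Close countable sets of vectors and functionals under rational combinations,
under choosing norming functionals, and under adding countably many vectors which determine the
countably many nonzero coordinates of each functional. By Hahn-Banach, `X` is the direct sum of the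
closed span of the vectors in a closed set and the annihilator of its functionals, with a projection
of `N`-norm one. The projections indexed by countable closed sets form a skeleton.

(ii) ⇒ (iii). The adjoints of the projections restrict to retractions of the dual ball.

(iii) ⇒ (i). If some retractional skeleton of a dual ball is full, i.e. its retracts cover the ball,
then the ball is countably tight, closing-off yields norm-one projections for closed sets of all
cardinalities, and an induction on the cardinality, along continuous well-ordered chains of closed
sets, produces linearly dense vectors on which each functional has countable support.

Fullness holds when every renorming has a skeleton. If a functional `p` is not induced, the values
`r s p` yield functionals `d ξ`, `ξ < ω₁`, which are eventually zero at each vector but triangular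
against a bounded sequence of vectors `F η`. Take the equivalent norm whose dual ball is generated
by the translates `e₃ + d ξ`, the Euclidean circle spanned by `e₃` and `e₁`, and a small ball.
Circle points near `e₃` are exposed by single vectors, so they are induced by every skeleton, and
hence so is their limit `e₃`. On the other hand, induced points `z α` that agree with `e₃ + d α` on
countably many suitable vectors converge to `e₃`, while the vectors `F η` keep `e₃` away from the
closure of every countable part of the family. This contradicts the countable tightness of induced
sets.
-/

open Filter Topology TopologicalSpace Set

universe u v

/-- A retractional skeleton in a topological space `K`: a family `r s : C(K, K)` of continuous
retractions indexed by an up-directed (nonempty) partially ordered set `Γ` such that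
(i) each `r s` has metrizable range and the net `(r s x)` converges to `x`;
(ii) `s ≤ t` implies `r s ∘ r t = r t ∘ r s = r s`;
(iii) each strictly increasing sequence has a supremum `t` and `r t x = lim_n r (f n) x`. -/
structure RetractionalSkeleton (K : Type u) [TopologicalSpace K] : Type (u + 1) where
  Γ : Type u
  [po : PartialOrder Γ]
  [ne : Nonempty Γ]
  directed : ∀ s t : Γ, ∃ w, s ≤ w ∧ t ≤ w
  r : Γ → C(K, K)
  isRetraction : ∀ s, ∀ x : K, r s (r s x) = r s x
  metrizable : ∀ s, MetrizableSpace ↥(Set.range (r s))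
  tendsto_id : ∀ x : K, Tendsto (fun s => r s x) atTop (𝓝 x)
  comp_eq_of_le : ∀ s t : Γ, s ≤ t → ∀ x : K, r s (r t x) = r s x ∧ r t (r s x) = r s x
  sup_seq : ∀ f : ℕ → Γ, StrictMono f → ∃ t : Γ, IsLUB (Set.range f) t ∧
    ∀ x : K, Tendsto (fun n => r (f n) x) atTop (𝓝 (r t x))

/-- The set `D(𝔰) = ⋃ s, r s [K]` induced by a retractional skeleton. -/
def RetractionalSkeleton.inducedSet {K : Type u} [TopologicalSpace K]
    (𝔰 : RetractionalSkeleton K) : Set K := ⋃ s, Set.range (𝔰.r s)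

/-- `D` is induced by an r-skeleton in `K`. -/
def IsInducedByRSkeleton {K : Type u} [TopologicalSpace K] (D : Set K) : Prop :=
  ∃ 𝔰 : RetractionalSkeleton K, 𝔰.inducedSet = D

/-- `K` has a retractional skeleton. -/
def HasRetractionalSkeleton (K : Type u) [TopologicalSpace K] : Prop :=
  Nonempty (RetractionalSkeleton K)

/-- `K` is a Corson compact space: it is homeomorphic to a compact subset of
`Σ(Γ) = {x ∈ ℝ^Γ : x γ ≠ 0 for at most countably many γ}` for some set `Γ`. -/
def IsCorsonCompact (K : Type u) [TopologicalSpace K] : Prop :=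
  ∃ (Γ : Type u) (A : Set (Γ → ℝ)), IsCompact A ∧
    (∀ x ∈ A, {γ | x γ ≠ 0}.Countable) ∧ Nonempty (K ≃ₜ ↥A)

/-- A projectional skeleton in a normed space `X`: a family of bounded linear projections
indexed by an up-directed (nonempty) partially ordered set `Γ` such that
(i) `X = ⋃ s, P s [X]` and each `P s [X]` is separable;
(ii) `s ≤ t` implies `P s ∘ P t = P t ∘ P s = P s`;
(iii) each strictly increasing sequence has a supremum `t` with
`P t [X] = closure (⋃ n, P (f n) [X])`. -/
structure ProjectionalSkeleton (X : Type u) [NormedAddCommGroup X] [NormedSpace ℝ X] :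
    Type (u + 1) where
  Γ : Type u
  [po : PartialOrder Γ]
  [ne : Nonempty Γ]
  directed : ∀ s t : Γ, ∃ w, s ≤ w ∧ t ≤ w
  P : Γ → X →L[ℝ] X
  idem : ∀ s, ∀ x : X, P s (P s x) = P s x
  separable : ∀ s, IsSeparable (Set.range (P s))
  covers : ∀ x : X, ∃ s, x ∈ Set.range (P s)
  comp_eq_of_le : ∀ s t : Γ, s ≤ t → ∀ x : X, P s (P t x) = P s x ∧ P t (P s x) = P s x
  sup_seq : ∀ f : ℕ → Γ, StrictMono f → ∃ t : Γ, IsLUB (Set.range f) t ∧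
    (Set.range (P t) : Set X) = closure (⋃ n, Set.range (P (f n)))

/-- `X` has a 1-projectional skeleton: a projectional skeleton with `‖P s‖ ≤ 1` for all `s`. -/
def Has1ProjectionalSkeleton (X : Type u) [NormedAddCommGroup X] [NormedSpace ℝ X] : Prop :=
  ∃ 𝔰 : ProjectionalSkeleton X, ∀ s, ‖𝔰.P s‖ ≤ 1

/-- The closed unit ball of the dual of `X`, as a subset of the weak* dual `(X*, w*)`. -/
def dualBall (X : Type u) [NormedAddCommGroup X] [NormedSpace ℝ X] : Set (WeakDual ℝ X) :=
  {φ | ∀ x : X, |φ x| ≤ ‖x‖}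

/-- `N` is a norm on `X` equivalent to the given norm `‖·‖`. -/
def IsEquivNorm {X : Type u} [NormedAddCommGroup X] [NormedSpace ℝ X] (N : X → ℝ) : Prop :=
  (∀ (a : ℝ) (x : X), N (a • x) = |a| * N x) ∧
  (∀ x y : X, N (x + y) ≤ N x + N y) ∧
  (∃ c C : ℝ, 0 < c ∧ ∀ x : X, c * ‖x‖ ≤ N x ∧ N x ≤ C * ‖x‖)

/-- The Banach space `(X, N)` has a 1-projectional skeleton: since an equivalent norm induces
the same topology, this means a projectional skeleton whose projections satisfy
`N (P s x) ≤ N x`, i.e. have norm at most `1` with respect to `N`. -/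
def Has1ProjectionalSkeletonWrt {X : Type u} [NormedAddCommGroup X] [NormedSpace ℝ X]
    (N : X → ℝ) : Prop :=
  ∃ 𝔰 : ProjectionalSkeleton X, ∀ s, ∀ x : X, N (𝔰.P s x) ≤ N x

/-- The closed unit ball of the dual of `(X, N)`, as a subset of the weak* dual. -/
def dualBallWrt {X : Type u} [NormedAddCommGroup X] [NormedSpace ℝ X] (N : X → ℝ) :
    Set (WeakDual ℝ X) :=
  {φ | ∀ x : X, |φ x| ≤ N x}

/-! ### Dual balls of equivalent norms -/

section Seminorm

variable {E : Type*} [AddCommGroup E] [Module ℝ E]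

theorem exists_linearMap_eq_seminorm (p : Seminorm ℝ E) (x : E) :
    ∃ f : E →ₗ[ℝ] ℝ, (∀ z, |f z| ≤ p z) ∧ f x = p x := by
  let : SeminormedAddCommGroup E := p.toAddGroupSeminorm.toSeminormedAddCommGroup
  let : NormedSpace ℝ E := ⟨fun a z => (map_smul_eq_mul p a z).le⟩
  obtain ⟨g, hg, hgx⟩ := exists_dual_vector'' ℝ x
  exact ⟨g, fun z => (g.le_of_opNorm_le hg z).trans_eq (one_mul _), hgx⟩

theorem exists_mem_seminorm_sub_lt (p : Seminorm ℝ E) (Y : Submodule ℝ E) {x : E}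
    (hx : ∀ f : E →ₗ[ℝ] ℝ, (∀ z, |f z| ≤ p z) → (∀ y ∈ Y, f y = 0) → f x = 0)
    {ε : ℝ} (hε : 0 < ε) : ∃ y ∈ Y, p (x - y) < ε := by
  let : SeminormedAddCommGroup E := p.toAddGroupSeminorm.toSeminormedAddCommGroup
  let : NormedSpace ℝ E := ⟨fun a z => (map_smul_eq_mul p a z).le⟩
  -- A norming functional of the class of `x` in `E ⧸ Y` is a functional on `E` killing `Y`.
  obtain ⟨g, hg, hgx⟩ := exists_dual_vector'' ℝ (Y.mkQ x)
  have hzero : ‖Y.mkQ x‖ = 0 := by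
    refine hgx.symm.trans (hx (g.toLinearMap ∘ₗ Y.mkQ) (fun z => ?_) fun y hy => ?_)
    · exact (g.le_of_opNorm_le hg _).trans
        ((one_mul _).trans_le (Submodule.Quotient.norm_mk_le Y z))
    · simp [(Submodule.Quotient.mk_eq_zero Y).2 hy]
  obtain ⟨m, hm, hlt⟩ := Submodule.Quotient.norm_mk_lt (Y.mkQ x) hε
  rw [hzero, zero_add] at hlt
  exact ⟨x - m, (Submodule.Quotient.eq Y).1 hm.symm, by rwa [sub_sub_cancel]⟩

end Seminorm

section Determining

variable {K : Type*} {T : Type*} {ι : Type*} {β : Type*} [TopologicalSpace K] [CompactSpace K]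
  [TopologicalSpace T] [MetrizableSpace T] [TopologicalSpace β] [T2Space β]

theorem exists_countable_determining {e : ι → K → β} (he : ∀ i, Continuous (e i))
    (hsep : ∀ x y, (∀ i, e i x = e i y) → x = y) {g : K → T} (hg : Continuous g) :
    ∃ S : Set ι, S.Countable ∧ ∀ x y, (∀ i ∈ S, e i x = e i y) → g x = g y := by
  let := metrizableSpaceMetric T
  have hfin : ∀ n : ℕ, ∃ F : Finset ι, {w : K × K | (1 : ℝ) / (n + 1) ≤ dist (g w.1) (g w.2)} ⊆
      ⋃ i ∈ F, {w | e i w.1 ≠ e i w.2} := by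
    refine fun n => IsCompact.elim_finite_subcover (IsClosed.isCompact ?_) _ (fun i => ?_) ?_
    · exact isClosed_le continuous_const (by fun_prop)
    · exact isOpen_ne_fun ((he i).comp continuous_fst) ((he i).comp continuous_snd)
    · intro w hw
      by_contra! hcon
      simp only [mem_iUnion, not_exists, mem_ofPred_eq, not_not] at hw hcon
      rw [hsep _ _ hcon, dist_self] at hw
      exact hw.not_gt Nat.one_div_pos_of_nat
  choose F hF using hfin
  refine ⟨⋃ n, (F n : Set ι), countable_iUnion fun n => (F n).countable_toSet, fun x y h => ?_⟩
  by_contra hne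
  obtain ⟨n, hn⟩ := exists_nat_one_div_lt (dist_pos.2 hne)
  obtain ⟨i, hi, hi'⟩ := mem_iUnion₂.1 (hF n (show (x, y) ∈ _ from hn.le))
  exact hi' (h i (mem_iUnion.2 ⟨n, hi⟩))

end Determining

section DualBall

variable {X : Type u} [NormedAddCommGroup X] [NormedSpace ℝ X] {N : X → ℝ}

theorem isEquivNorm_norm : IsEquivNorm (fun x : X => ‖x‖) :=
  ⟨fun a x => by simp [norm_smul], norm_add_le, 1, 1, one_pos, fun x => by simp⟩

namespace IsEquivNorm

/-- An equivalent norm, bundled as a seminorm. -/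
def toSeminorm (hN : IsEquivNorm N) : Seminorm ℝ X :=
  Seminorm.of N hN.2.1 hN.1

theorem nonneg (hN : IsEquivNorm N) (x : X) : 0 ≤ N x := apply_nonneg hN.toSeminorm x

theorem map_zero (hN : IsEquivNorm N) : N 0 = 0 := _root_.map_zero hN.toSeminorm

theorem map_sub_rev (hN : IsEquivNorm N) (x y : X) : N (x - y) = N (y - x) :=
  _root_.map_sub_rev hN.toSeminorm x y

theorem exists_bound (hN : IsEquivNorm N) : ∃ C : ℝ, 0 < C ∧ ∀ x, N x ≤ C * ‖x‖ := by
  obtain ⟨_, _, c, C, _, h⟩ := hN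
  exact ⟨max C 1, by positivity, fun x => (h x).2.trans (by gcongr; exact le_max_left _ _)⟩

theorem continuous (hN : IsEquivNorm N) : Continuous N := by
  obtain ⟨C, hC, hb⟩ := hN.exists_bound
  have hq : Continuous (C.toNNReal • normSeminorm ℝ X) :=
    continuous_const.smul continuous_norm
  refine Seminorm.continuous_of_le (p := hN.toSeminorm) hq fun x => (hb x).trans_eq ?_
  simp [NNReal.smul_def, hC.le]

end IsEquivNorm

theorem zero_mem_dualBallWrt (hN : IsEquivNorm N) : (0 : WeakDual ℝ X) ∈ dualBallWrt N :=
  fun x => abs_zero.trans_le (hN.nonneg x)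

theorem IsEquivNorm.comb_mem_dualBallWrt (hN : IsEquivNorm N) {φ ψ : WeakDual ℝ X}
    (hφ : φ ∈ dualBallWrt N) (hψ : ψ ∈ dualBallWrt N) {q r : ℝ} (hqr : |q| + |r| ≤ 1) :
    q • φ + r • ψ ∈ dualBallWrt N := fun x =>
  calc |q * φ x + r * ψ x| ≤ |q| * |φ x| + |r| * |ψ x| := by
        rw [← abs_mul, ← abs_mul]; exact abs_add_le _ _
    _ ≤ |q| * N x + |r| * N x := by gcongr <;> [exact hφ x; exact hψ x]
    _ = (|q| + |r|) * N x := by ring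
    _ ≤ N x := mul_le_of_le_one_left (hN.nonneg x) hqr

theorem isClosed_dualBallWrt : IsClosed (dualBallWrt N) := by
  simp only [dualBallWrt, ofPred_forall]
  exact isClosed_iInter fun x =>
    isClosed_le ((WeakDual.eval_continuous x).abs) continuous_const

theorem isCompact_dualBallWrt (hN : IsEquivNorm N) : IsCompact (dualBallWrt N) := by
  obtain ⟨C, hC, hb⟩ := hN.exists_bound
  refine (WeakDual.isCompact_closedBall (𝕜 := ℝ) (E := X) 0 C).of_isClosed_subset
    isClosed_dualBallWrt fun φ hφ => ?_
  simp only [mem_preimage, Metric.mem_closedBall, dist_zero_right]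
  exact ContinuousLinearMap.opNorm_le_bound _ hC.le fun x => (hφ x).trans (hb x)

theorem compactSpace_dualBallWrt (hN : IsEquivNorm N) : CompactSpace (dualBallWrt N) :=
  isCompact_iff_compactSpace.1 (isCompact_dualBallWrt hN)

theorem continuous_dualBallWrt_eval (x : X) :
    Continuous fun φ : dualBallWrt N => (φ : WeakDual ℝ X) x :=
  (WeakDual.eval_continuous x).comp continuous_subtype_val

theorem dualBallWrt_ext {φ ψ : dualBallWrt N}
    (h : ∀ x, (φ : WeakDual ℝ X) x = (ψ : WeakDual ℝ X) x) : φ = ψ :=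
  Subtype.ext (DFunLike.ext _ _ h)

theorem tendsto_dualBallWrt_iff {α : Type*} {l : Filter α} {f : α → dualBallWrt N}
    {φ : dualBallWrt N} : Tendsto f l (𝓝 φ) ↔
      ∀ x, Tendsto (fun a => (f a : WeakDual ℝ X) x) l (𝓝 ((φ : WeakDual ℝ X) x)) :=
  tendsto_subtype_rng.trans tendsto_iff_forall_eval_tendsto_topDualPairing

theorem IsEquivNorm.exists_mem_dualBallWrt (hN : IsEquivNorm N) (f : X →ₗ[ℝ] ℝ)
    (hf : ∀ x, |f x| ≤ N x) : ∃ φ ∈ dualBallWrt N, ∀ x, (φ : WeakDual ℝ X) x = f x := by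
  obtain ⟨C, -, hb⟩ := hN.exists_bound
  exact ⟨StrongDual.toWeakDual (f.mkContinuous C fun x => (hf x).trans (hb x)), hf, fun _ => rfl⟩

theorem IsEquivNorm.exists_norming (hN : IsEquivNorm N) (x : X) :
    ∃ φ ∈ dualBallWrt N, (φ : WeakDual ℝ X) x = N x := by
  obtain ⟨f, hf, hfx⟩ := exists_linearMap_eq_seminorm hN.toSeminorm x
  obtain ⟨φ, hφ, h⟩ := hN.exists_mem_dualBallWrt f hf
  exact ⟨φ, hφ, (h x).trans hfx⟩

/-- A choice of a functional in the dual ball of `(X, N)` that attains its `N`-norm at `x`. -/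
noncomputable def IsEquivNorm.normingFunctional (hN : IsEquivNorm N) (x : X) : WeakDual ℝ X :=
  (hN.exists_norming x).choose

theorem IsEquivNorm.normingFunctional_mem (hN : IsEquivNorm N) (x : X) :
    hN.normingFunctional x ∈ dualBallWrt N :=
  (hN.exists_norming x).choose_spec.1

theorem IsEquivNorm.normingFunctional_apply (hN : IsEquivNorm N) (x : X) :
    hN.normingFunctional x x = N x :=
  (hN.exists_norming x).choose_spec.2

theorem exists_eval_separating {L : Set (WeakDual ℝ X)} (hL : Convex ℝ L) (hc : IsClosed L)
    {f : WeakDual ℝ X} (hf : f ∉ L) : ∃ z : X, ∃ u : ℝ, (∀ φ ∈ L, φ z < u) ∧ u < f z := by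
  have : LocallyConvexSpace ℝ (WeakDual ℝ X) :=
    inferInstanceAs (LocallyConvexSpace ℝ (WeakBilin (topDualPairing ℝ X)))
  obtain ⟨g, u, hlt, hgt⟩ := geometric_hahn_banach_closed_point hL hc hf
  obtain ⟨z, rfl⟩ := LinearMap.dualEmbedding_surjective (topDualPairing ℝ X) g
  exact ⟨z, u, hlt, hgt⟩

/-- The seminorm `x ↦ sup_{φ ∈ B} |φ x|`. It has the junk value `0` when `B` is not pointwise
bounded. -/
noncomputable def supSeminorm (B : Set (WeakDual ℝ X)) : Seminorm ℝ X :=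
  ⨆ φ : B, (φ : WeakDual ℝ X).toLinearMap.toSeminorm

section SupSeminorm

variable {B : Set (WeakDual ℝ X)}

theorem bddAbove_range_toSeminorm (hB : B ⊆ dualBallWrt N) :
    BddAbove (range fun φ : B => (φ : WeakDual ℝ X).toLinearMap.toSeminorm) :=
  Seminorm.bddAbove_range_iff.2 fun x => ⟨N x, forall_mem_range.2 fun φ => hB φ.2 x⟩

theorem abs_le_supSeminorm (hB : B ⊆ dualBallWrt N) {φ : WeakDual ℝ X} (hφ : φ ∈ B) (x : X) :
    |φ x| ≤ supSeminorm B x :=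
  le_ciSup (bddAbove_range_toSeminorm hB) ⟨φ, hφ⟩ x

theorem supSeminorm_le (hB : B ⊆ dualBallWrt N) {x : X} {r : ℝ} (hr : 0 ≤ r)
    (h : ∀ φ ∈ B, |φ x| ≤ r) : supSeminorm B x ≤ r := by
  rw [supSeminorm, Seminorm.iSup_apply (bddAbove_range_toSeminorm hB)]
  exact Real.iSup_le (fun φ => h φ φ.2) hr

end SupSeminorm

end DualBall

/-! ### Projections of norm one -/

theorem exists_seminorm_sub_eq_zero {X : Type*} [NormedAddCommGroup X] [NormedSpace ℝ X]
    [CompleteSpace X] {p : Seminorm ℝ X} (hp : Continuous p) {Y : Submodule ℝ X}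
    (hY : IsClosed (Y : Set X)) {c : ℝ} (hc : 0 < c) (hpY : ∀ y ∈ Y, c * ‖y‖ ≤ p y) {x : X}
    (hx : ∀ ε > 0, ∃ y ∈ Y, p (x - y) < ε) : ∃ y ∈ Y, p (x - y) = 0 := by
  choose y hyY hy using fun n : ℕ => hx (1 / ((n : ℝ) + 1)) Nat.one_div_pos_of_nat
  have hle : ∀ n m k, k ≤ n → k ≤ m → dist (y n) (y m) ≤ 2 / c * (1 / ((k : ℝ) + 1)) := by
    intro n m k hn hm
    have hn' : p (x - y n) ≤ 1 / ((k : ℝ) + 1) :=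
      (hy n).le.trans (Nat.one_div_le_one_div hn)
    have hm' : p (x - y m) ≤ 1 / ((k : ℝ) + 1) :=
      (hy m).le.trans (Nat.one_div_le_one_div hm)
    have hsub : p (y n - y m) ≤ p (x - y m) + p (x - y n) := by
      simpa using map_sub_le_add p (x - y m) (x - y n)
    have := hpY _ (Y.sub_mem (hyY n) (hyY m))
    rw [dist_eq_norm, div_mul_eq_mul_div, le_div_iff₀' hc]
    linarith
  have hlim : Tendsto (fun n : ℕ => 2 / c * (1 / ((n : ℝ) + 1))) atTop (𝓝 0) := by
    simpa using tendsto_one_div_add_atTop_nhds_zero_nat.const_mul (2 / c)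
  obtain ⟨y₀, hy₀⟩ := cauchySeq_tendsto_of_complete (cauchySeq_of_le_tendsto_0 _ hle hlim)
  refine ⟨y₀, hY.mem_of_tendsto hy₀ (Eventually.of_forall hyY), ?_⟩
  have hp₀ : Tendsto (fun n => p (x - y n)) atTop (𝓝 (p (x - y₀))) :=
    (hp.tendsto _).comp (tendsto_const_nhds.sub hy₀)
  exact tendsto_nhds_unique hp₀ (squeeze_zero (fun n => apply_nonneg p _) (fun n => (hy n).le)
    tendsto_one_div_add_atTop_nhds_zero_nat)

/-- A pair of sets `S ⊆ X` and `B ⊆ B_{(X, N)*}`, both stable under the rational operations, such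
that `B` norms `S` and `S` separates the points of the weak* closure of `B` from `0`. Such a pair
generates a projection of `N`-norm one onto the closure of `S`. -/
structure GoodPair {X : Type u} [NormedAddCommGroup X] [NormedSpace ℝ X] (N : X → ℝ) (S : Set X)
    (B : Set (WeakDual ℝ X)) : Prop where
  isEquivNorm : IsEquivNorm N
  zero_mem : (0 : X) ∈ S
  comb_mem : ∀ x ∈ S, ∀ y ∈ S, ∀ q r : ℚ, (q : ℝ) • x + (r : ℝ) • y ∈ S
  dual_sub : B ⊆ dualBallWrt N
  dual_zero : (0 : WeakDual ℝ X) ∈ B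
  dual_comb : ∀ φ ∈ B, ∀ ψ ∈ B, ∀ q r : ℚ, |q| + |r| ≤ 1 → (q : ℝ) • φ + (r : ℝ) • ψ ∈ B
  norming : ∀ x ∈ S, ∃ φ ∈ B, φ x = N x
  sep : ∀ φ ∈ closure B, (∀ x ∈ S, φ x = 0) → φ = 0

namespace GoodPair

variable {X : Type u} [NormedAddCommGroup X] [NormedSpace ℝ X] {N : X → ℝ} {S : Set X}
  {B : Set (WeakDual ℝ X)}

/-- The closure of `S`, which is a real subspace: the range of the projection. -/
def range (h : GoodPair N S B) : Submodule ℝ X where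
  carrier := closure S
  zero_mem' := subset_closure h.zero_mem
  add_mem' := by
    refine fun ha hb => map_mem_closure₂ continuous_add ha hb fun x hx y hy => ?_
    simpa using h.comb_mem x hx y hy 1 1
  smul_mem' := by
    refine fun c x hx => map_mem_closure₂ continuous_smul (Rat.denseRange_cast c) hx ?_
    rintro _ ⟨q, rfl⟩ y hy
    simpa using h.comb_mem y hy y hy q 0

/-- The annihilator of `B`: the kernel of the projection. -/
def ker (_h : GoodPair N S B) : Submodule ℝ X where
  carrier := {x | ∀ φ ∈ B, φ x = 0}
  zero_mem' := fun φ _ => map_zero φ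
  add_mem' := fun ha hb φ hφ => by rw [map_add, ha φ hφ, hb φ hφ, add_zero]
  smul_mem' := fun c x hx φ hφ => by rw [map_smul, hx φ hφ, smul_zero]

theorem isClosed_range (h : GoodPair N S B) : IsClosed (h.range : Set X) := isClosed_closure

theorem isClosed_ker (h : GoodPair N S B) : IsClosed (h.ker : Set X) := by
  change IsClosed {x | ∀ φ ∈ B, φ x = 0}
  simp only [ofPred_forall]
  exact isClosed_iInter fun φ => isClosed_iInter fun _ =>
    isClosed_eq (map_continuous φ) continuous_const

theorem neg_mem (h : GoodPair N S B) {φ : WeakDual ℝ X} (hφ : φ ∈ B) : -φ ∈ B := by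
  simpa using h.dual_comb φ hφ 0 h.dual_zero (-1) 0 (by simp)

theorem convex_closure (h : GoodPair N S B) : Convex ℝ (closure B) := by
  refine convex_iff_openSegment_subset.2 fun φ hφ ψ hψ => ?_
  rw [openSegment_eq_image, image_subset_iff]
  intro a ha
  refine map_mem_closure₂ (f := fun (t : ℝ) (w : WeakDual ℝ X × WeakDual ℝ X) =>
    (1 - t) • w.1 + t • w.2) (by fun_prop)
    (Rat.denseRange_cast.open_subset_closure_inter isOpen_Ioo ha)
    (closure_prod_eq (s := B) (t := B) ▸ mk_mem_prod hφ hψ) ?_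
  rintro _ ⟨⟨hq₀, hq₁⟩, q, rfl⟩ w ⟨hφ, hψ⟩
  norm_cast at hq₀ hq₁
  have := h.dual_comb _ hφ _ hψ (1 - q) q (by
    rw [abs_of_pos hq₀, abs_of_pos (by linarith)]; linarith)
  simpa using this

theorem mem_closure (h : GoodPair N S B) {f : WeakDual ℝ X} (hf : ∀ z, f z ≤ supSeminorm B z) :
    f ∈ closure B := by
  by_contra hcon
  obtain ⟨z, u, hlt, hgt⟩ := exists_eval_separating h.convex_closure isClosed_closure hcon
  have hle : supSeminorm B z ≤ u := by
    refine supSeminorm_le h.dual_sub ?_ fun φ hφ => abs_le.2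
      ⟨?_, (hlt φ (subset_closure hφ)).le⟩
    · exact (hlt 0 (subset_closure h.dual_zero)).le
    · exact neg_le.1 (hlt _ (subset_closure (h.neg_mem hφ))).le
  exact (hgt.trans_le (hf z)).not_ge hle

theorem supSeminorm_le_norm (h : GoodPair N S B) (x : X) : supSeminorm B x ≤ N x :=
  supSeminorm_le h.dual_sub (h.isEquivNorm.nonneg x) fun _ hφ => h.dual_sub hφ x

theorem continuous_supSeminorm (h : GoodPair N S B) : Continuous (supSeminorm B) :=
  Seminorm.continuous_of_le (q := h.isEquivNorm.toSeminorm) h.isEquivNorm.continuous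
    h.supSeminorm_le_norm

theorem norm_le_supSeminorm (h : GoodPair N S B) {y : X} (hy : y ∈ h.range) :
    N y ≤ supSeminorm B y := by
  refine closure_minimal (fun x hx => ?_)
    (isClosed_le h.isEquivNorm.continuous h.continuous_supSeminorm) hy
  obtain ⟨φ, hφ, hφx⟩ := h.norming x hx
  exact hφx.ge.trans ((le_abs_self _).trans (abs_le_supSeminorm h.dual_sub hφ x))

theorem supSeminorm_eq_zero_iff (h : GoodPair N S B) {x : X} :
    supSeminorm B x = 0 ↔ x ∈ h.ker :=
  ⟨fun hx φ hφ => abs_nonpos_iff.1 ((abs_le_supSeminorm h.dual_sub hφ x).trans_eq hx),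
    fun hx => le_antisymm (supSeminorm_le h.dual_sub le_rfl fun φ hφ => by simp [hx φ hφ])
      (apply_nonneg _ _)⟩

theorem norm_le_norm_add (h : GoodPair N S B) {y z : X} (hy : y ∈ h.range) (hz : z ∈ h.ker) :
    N y ≤ N (y + z) :=
  calc N y ≤ supSeminorm B (y + z - z) := by simpa using h.norm_le_supSeminorm hy
    _ ≤ supSeminorm B (y + z) + supSeminorm B z := map_sub_le_add _ _ _
    _ = supSeminorm B (y + z) := by rw [h.supSeminorm_eq_zero_iff.2 hz, add_zero]
    _ ≤ N (y + z) := h.supSeminorm_le_norm _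

/-- If `x` could not be approximated, Hahn-Banach would give a nonzero element of the closure of
`B` vanishing on `S`. -/
theorem exists_mem_range_supSeminorm_sub_lt (h : GoodPair N S B) (x : X) {ε : ℝ} (hε : 0 < ε) :
    ∃ y ∈ h.range, supSeminorm B (x - y) < ε := by
  refine exists_mem_seminorm_sub_lt _ _ (fun f hf hfS => ?_) hε
  obtain ⟨φ, -, hφ⟩ := h.isEquivNorm.exists_mem_dualBallWrt f fun z =>
    (hf z).trans (h.supSeminorm_le_norm z)
  have hmem : φ ∈ closure B := h.mem_closure fun z => hφ z ▸ (le_abs_self _).trans (hf z)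
  have hzero : φ = 0 := h.sep φ hmem fun y hy => hφ y ▸ hfS y (subset_closure hy)
  rw [← hφ, hzero]
  rfl

section Proj

variable [CompleteSpace X]

theorem isCompl_range_ker (h : GoodPair N S B) : IsCompl h.range h.ker := by
  obtain ⟨c, C, hc, hcC⟩ := h.isEquivNorm.2.2
  have hbelow : ∀ y ∈ h.range, c * ‖y‖ ≤ supSeminorm B y := fun y hy =>
    (hcC y).1.trans (h.norm_le_supSeminorm hy)
  refine ⟨Submodule.disjoint_def.2 fun x hx hx' => ?_, codisjoint_iff_le_sup.2 fun x _ => ?_⟩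
  · have hcx : c * ‖x‖ ≤ 0 := (hbelow x hx).trans_eq (h.supSeminorm_eq_zero_iff.2 hx')
    exact norm_le_zero_iff.1 (nonpos_of_mul_nonpos_right hcx hc)
  · obtain ⟨y, hy, hxy⟩ := exists_seminorm_sub_eq_zero h.continuous_supSeminorm h.isClosed_range
      hc hbelow fun ε hε => h.exists_mem_range_supSeminorm_sub_lt x hε
    rw [← add_sub_cancel y x]
    exact Submodule.add_mem_sup hy (h.supSeminorm_eq_zero_iff.1 hxy)

theorem isTopCompl_range_ker (h : GoodPair N S B) : h.range.IsTopCompl h.ker :=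
  Submodule.IsCompl.isTopCompl_of_isClosed h.isCompl_range_ker h.isClosed_range h.isClosed_ker

/-- The projection onto the closure of `S` along the annihilator of `B`. -/
noncomputable def proj (h : GoodPair N S B) : X →L[ℝ] X :=
  h.range.projectionL h.ker h.isTopCompl_range_ker

theorem proj_mem (h : GoodPair N S B) (x : X) : h.proj x ∈ closure S :=
  Submodule.projectionL_apply_mem h.isTopCompl_range_ker x

theorem proj_eq_self (h : GoodPair N S B) {x : X} (hx : x ∈ closure S) : h.proj x = x :=
  (Submodule.projectionL_eq_self_iff _ x).2 hx

theorem proj_eq_zero (h : GoodPair N S B) {x : X} (hx : ∀ φ ∈ B, φ x = 0) : h.proj x = 0 :=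
  (Submodule.projectionL_apply_eq_zero_iff _).2 hx

theorem range_proj (h : GoodPair N S B) : Set.range h.proj = closure S :=
  (range_subset_iff.2 h.proj_mem).antisymm fun x hx => ⟨x, h.proj_eq_self hx⟩

theorem sub_proj_mem_ker (h : GoodPair N S B) (x : X) : x - h.proj x ∈ h.ker := by
  refine (Submodule.projectionL_apply_eq_zero_iff h.isTopCompl_range_ker).1 ?_
  change h.proj (x - h.proj x) = 0
  rw [map_sub, h.proj_eq_self (h.proj_mem x), sub_self]

theorem apply_proj (h : GoodPair N S B) {φ : WeakDual ℝ X} (hφ : φ ∈ closure B) (x : X) :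
    φ (h.proj x) = φ x := by
  refine closure_minimal (fun ψ hψ => ?_)
    (isClosed_eq (WeakDual.eval_continuous _) (WeakDual.eval_continuous x)) hφ
  have hker := h.sub_proj_mem_ker x ψ hψ
  rw [map_sub, sub_eq_zero] at hker
  exact hker.symm

theorem norm_proj_le (h : GoodPair N S B) (x : X) : N (h.proj x) ≤ N x := by
  simpa using h.norm_le_norm_add (h.proj_mem x) (h.sub_proj_mem_ker x)

theorem mem_closure_of_eq_comp_proj (h : GoodPair N S B) {φ ψ : WeakDual ℝ X}
    (hφ : φ ∈ dualBallWrt N) (hψ : ∀ x, ψ x = φ (h.proj x)) : ψ ∈ closure B := by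
  refine h.mem_closure fun z => ?_
  calc ψ z ≤ N (h.proj z) := hψ z ▸ (le_abs_self _).trans (hφ _)
    _ ≤ supSeminorm B (h.proj z) := h.norm_le_supSeminorm (h.proj_mem z)
    _ ≤ supSeminorm B z := supSeminorm_le h.dual_sub (apply_nonneg _ _) fun χ hχ => by
        rw [h.apply_proj (subset_closure hχ)]
        exact abs_le_supSeminorm h.dual_sub hχ z

variable {S' : Set X} {B' : Set (WeakDual ℝ X)}

theorem proj_comp_of_subset (h : GoodPair N S B) (h' : GoodPair N S' B') (hS : S ⊆ S') (x : X) :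
    h'.proj (h.proj x) = h.proj x :=
  h'.proj_eq_self (closure_mono hS (h.proj_mem x))

theorem proj_comp_of_dual_subset (h : GoodPair N S B) (h' : GoodPair N S' B') (hB : B ⊆ B')
    (x : X) : h.proj (h'.proj x) = h.proj x := by
  rw [← sub_eq_zero, ← map_sub]
  refine h.proj_eq_zero fun φ hφ => ?_
  rw [map_sub, h'.apply_proj (subset_closure (hB hφ)), sub_self]

end Proj

end GoodPair

/-! ### Closing-off under countably-valued operations -/

section Hull

open Cardinal

variable {E : Type u} {op : E → E → Set E} {B : Set E}

/-- `M` contains the base set `B` and is closed under the set-valued binary operation `op`. -/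
structure OpClosed (op : E → E → Set E) (B M : Set E) : Prop where
  base_subset : B ⊆ M
  op_subset : ∀ a ∈ M, ∀ b ∈ M, op a b ⊆ M

/-- The closure operator generating the smallest set that contains `B` and is closed under `op`. -/
def opHull (op : E → E → Set E) (B : Set E) : ClosureOperator (Set E) :=
  .ofCompletePred (OpClosed op B) fun _ h =>
    ⟨subset_sInter fun M hM => (h M hM).base_subset, fun a ha b hb =>
      subset_sInter fun M hM => (h M hM).op_subset a (ha M hM) b (hb M hM)⟩

theorem opHull_subset {A M : Set E} (hM : OpClosed op B M) (h : A ⊆ M) : opHull op B A ⊆ M :=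
  ClosureOperator.closure_min (c := opHull op B) h hM

theorem OpClosed.iUnion {ι : Type v} [Nonempty ι] {M : ι → Set E}
    (h : ∀ i, OpClosed op B (M i)) (hd : Directed (· ⊆ ·) M) : OpClosed op B (⋃ i, M i) := by
  refine ⟨(h (Classical.arbitrary ι)).base_subset.trans (subset_iUnion M _), fun a ha b hb => ?_⟩
  obtain ⟨i, hi⟩ := mem_iUnion.1 ha
  obtain ⟨j, hj⟩ := mem_iUnion.1 hb
  obtain ⟨k, hik, hjk⟩ := hd i j
  exact ((h k).op_subset a (hik hi) b (hjk hj)).trans (subset_iUnion M k)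

/-- The stages of the construction of the hull from below. -/
def hullStage (op : E → E → Set E) (A : Set E) : ℕ → Set E
  | 0 => A
  | n + 1 => hullStage op A n ∪ ⋃ p : hullStage op A n × hullStage op A n, op p.1 p.2

theorem monotone_hullStage (A : Set E) : Monotone (hullStage op A) :=
  monotone_nat_of_le_succ fun _ => subset_union_left

theorem opHull_subset_iUnion_hullStage (A : Set E) :
    opHull op B A ⊆ ⋃ n, hullStage op (B ∪ A) n := by
  have hbase : B ∪ A ⊆ ⋃ n, hullStage op (B ∪ A) n :=
    subset_iUnion (hullStage op (B ∪ A)) 0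
  refine opHull_subset ⟨subset_union_left.trans hbase, fun a ha b hb c hc => ?_⟩
    (subset_union_right.trans hbase)
  obtain ⟨i, hi⟩ := mem_iUnion.1 ha
  obtain ⟨j, hj⟩ := mem_iUnion.1 hb
  refine mem_iUnion.2 ⟨max i j + 1, Or.inr (mem_iUnion.2 ⟨⟨⟨a, ?_⟩, ⟨b, ?_⟩⟩, hc⟩)⟩
  · exact monotone_hullStage _ (le_max_left i j) hi
  · exact monotone_hullStage _ (le_max_right i j) hj

theorem mk_hullStage_le (hop : ∀ a b, (op a b).Countable) (A : Set E) (n : ℕ) :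
    #(hullStage op A n) ≤ max ℵ₀ #A := by
  induction n with
  | zero => exact le_max_right _ _
  | succ n ih =>
    refine (mk_union_le _ _).trans (add_le_of_le (le_max_left _ _) ih ?_)
    refine (mk_iUnion_le _).trans (mul_le_of_le (le_max_left _ _) ?_ ?_)
    · rw [mk_prod, lift_id]
      exact mul_le_of_le (le_max_left _ _) ih ih
    · exact ciSup_le' fun p => (le_aleph0_iff_set_countable.2 (hop _ _)).trans (le_max_left _ _)

theorem mk_opHull_le (hop : ∀ a b, (op a b).Countable) (hB : B.Countable) (A : Set E) :
    #(opHull op B A) ≤ max ℵ₀ #A := by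
  have hBA : #(B ∪ A : Set E) ≤ max ℵ₀ #A := (mk_union_le _ _).trans (add_le_of_le
    (le_max_left _ _) ((le_aleph0_iff_set_countable.2 hB).trans (le_max_left _ _))
    (le_max_right _ _))
  have hunion := mk_iUnion_le_lift fun n => hullStage op (B ∪ A) n
  simp only [lift_uzero, mk_nat, lift_aleph0] at hunion
  refine (mk_le_mk_of_subset (opHull_subset_iUnion_hullStage A)).trans (hunion.trans
    (mul_le_of_le (le_max_left _ _) (le_max_left _ _) (ciSup_le' fun n => ?_)))
  exact (mk_hullStage_le hop _ n).trans (max_le (le_max_left _ _) hBA)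

theorem countable_opHull (hop : ∀ a b, (op a b).Countable) (hB : B.Countable) {A : Set E}
    (hA : A.Countable) : (opHull op B A).Countable := by
  rw [← le_aleph0_iff_set_countable] at hA ⊢
  exact (mk_opHull_le hop hB A).trans (max_le le_rfl hA)

end Hull

/-! ### Systems of projections -/

section System

variable {X : Type u} [NormedAddCommGroup X] [NormedSpace ℝ X] {ι : Type u} {N : X → ℝ}

/-- The objects which are closed off together: vectors, functionals and additional indices. -/
abbrev SysObj (X : Type u) [NormedAddCommGroup X] [NormedSpace ℝ X] (ι : Type u) : Type u :=
  X ⊕ (WeakDual ℝ X ⊕ ι)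

/-- The vectors belonging to `M`. -/
def vectorTrace (M : Set (SysObj X ι)) : Set X := {x | .inl x ∈ M}

/-- The functionals of the dual ball of `(X, N)` belonging to `M`. -/
def dualTrace (N : X → ℝ) (M : Set (SysObj X ι)) : Set (WeakDual ℝ X) :=
  {φ | φ ∈ dualBallWrt N ∧ .inr (.inl φ) ∈ M}

theorem vectorTrace_mono {M M' : Set (SysObj X ι)} (h : M ⊆ M') : vectorTrace M ⊆ vectorTrace M' :=
  fun _ hx => h hx

theorem dualTrace_mono {M M' : Set (SysObj X ι)} (h : M ⊆ M') : dualTrace N M ⊆ dualTrace N M' :=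
  fun _ hφ => ⟨hφ.1, h hφ.2⟩

theorem closure_dualTrace_subset (M : Set (SysObj X ι)) :
    closure (dualTrace N M) ⊆ dualBallWrt N :=
  closure_minimal (fun _ hφ => hφ.1) isClosed_dualBallWrt

theorem vectorTrace_iUnion {α : Type*} (M : α → Set (SysObj X ι)) :
    vectorTrace (⋃ a, M a) = ⋃ a, vectorTrace (M a) := by
  ext x
  simp [vectorTrace]

/-- The operations making the traces of a closed set on `X` and `X*` stable under rational
combinations and the former normed by the latter. -/
noncomputable def baseOp (hN : IsEquivNorm N) : SysObj X ι → SysObj X ι → Set (SysObj X ι)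
  | .inl x, .inl y => insert (.inr (.inl (hN.normingFunctional x)))
      (range fun p : ℚ × ℚ => .inl ((p.1 : ℝ) • x + (p.2 : ℝ) • y))
  | .inr (.inl φ), .inr (.inl ψ) =>
      range fun p : ℚ × ℚ => .inr (.inl ((p.1 : ℝ) • φ + (p.2 : ℝ) • ψ))
  | _, _ => ∅

theorem countable_baseOp (hN : IsEquivNorm N) (a b : SysObj X ι) : (baseOp hN a b).Countable := by
  rcases a with x | φ | i <;> rcases b with y | ψ | _ <;>
    first
    | exact countable_empty
    | exact countable_range _
    | exact (countable_range _).insert _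

/-- The closure operator adjoining the zero vector, the zero functional and the values of the
operations `baseOp` and `ex`. -/
noncomputable def sysHull (hN : IsEquivNorm N) (ex : SysObj X ι → SysObj X ι → Set (SysObj X ι)) :
    ClosureOperator (Set (SysObj X ι)) :=
  opHull (fun a b => baseOp hN a b ∪ ex a b) {.inl 0, .inr (.inl 0)}

/-- Closing-off operations such that every closed set `M` yields a norm-one projection onto the
closed span of the vectors in `M`. -/
structure ProjSystem (N : X → ℝ) (ι : Type u) where
  isEquivNorm : IsEquivNorm N
  ex : SysObj X ι → SysObj X ι → Set (SysObj X ι)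
  countable_ex : ∀ a b, (ex a b).Countable
  sep : ∀ M, (sysHull isEquivNorm ex).IsClosed M → ∀ φ ∈ closure (dualTrace N M),
    (∀ x ∈ vectorTrace M, φ x = 0) → φ = 0

namespace ProjSystem

variable (𝔖 : ProjSystem N ι)

/-- The closure operator of the operations of the system. -/
noncomputable def hull : ClosureOperator (Set (SysObj X ι)) := sysHull 𝔖.isEquivNorm 𝔖.ex

/-- Sets closed under the operations of the system. -/
def Closed (M : Set (SysObj X ι)) : Prop := 𝔖.hull.IsClosed M

theorem countable_op (a b : SysObj X ι) : (baseOp 𝔖.isEquivNorm a b ∪ 𝔖.ex a b).Countable :=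
  (countable_baseOp _ a b).union (𝔖.countable_ex a b)

theorem closed_hull (A : Set (SysObj X ι)) : 𝔖.Closed (𝔖.hull A) := 𝔖.hull.isClosed_closure A

theorem mk_hull_le (A : Set (SysObj X ι)) :
    Cardinal.mk (𝔖.hull A) ≤ max Cardinal.aleph0 (Cardinal.mk A) :=
  mk_opHull_le 𝔖.countable_op (by simp) A

theorem countable_hull {A : Set (SysObj X ι)} (hA : A.Countable) : (𝔖.hull A).Countable :=
  countable_opHull 𝔖.countable_op (by simp) hA

theorem closed_iUnion {α : Type v} [Nonempty α] {M : α → Set (SysObj X ι)}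
    (h : ∀ a, 𝔖.Closed (M a)) (hd : Directed (· ⊆ ·) M) : 𝔖.Closed (⋃ a, M a) :=
  OpClosed.iUnion h hd

variable {𝔖} {M : Set (SysObj X ι)}

theorem Closed.baseOp_subset (h : 𝔖.Closed M) {a b : SysObj X ι} (ha : a ∈ M) (hb : b ∈ M) :
    baseOp 𝔖.isEquivNorm a b ⊆ M :=
  subset_union_left.trans (OpClosed.op_subset h a ha b hb)

theorem Closed.goodPair (h : 𝔖.Closed M) : GoodPair N (vectorTrace M) (dualTrace N M) where
  isEquivNorm := 𝔖.isEquivNorm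
  zero_mem := h.base_subset (Or.inl rfl)
  comb_mem x hx y hy q r :=
    h.baseOp_subset (a := .inl x) (b := .inl y) hx hy (Or.inr ⟨(q, r), rfl⟩)
  dual_sub := fun φ hφ => hφ.1
  dual_zero := ⟨zero_mem_dualBallWrt 𝔖.isEquivNorm, h.base_subset (Or.inr rfl)⟩
  dual_comb φ hφ ψ hψ q r hqr := by
    refine ⟨?_, h.baseOp_subset (a := .inr (.inl φ)) (b := .inr (.inl ψ)) hφ.2 hψ.2
      ⟨(q, r), rfl⟩⟩
    exact 𝔖.isEquivNorm.comb_mem_dualBallWrt hφ.1 hψ.1 (by exact_mod_cast hqr)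
  norming x hx := ⟨𝔖.isEquivNorm.normingFunctional x, ⟨𝔖.isEquivNorm.normingFunctional_mem x,
    h.baseOp_subset (a := .inl x) (b := .inl x) hx hx (Or.inl rfl)⟩,
    𝔖.isEquivNorm.normingFunctional_apply x⟩
  sep := 𝔖.sep M h

end ProjSystem

end System

/-! ### Corson dual balls yield projectional skeletons -/

section CorsonToProj

variable {X : Type u} [NormedAddCommGroup X] [NormedSpace ℝ X] {N : X → ℝ}

theorem exists_sigma_embedding (hX : IsCorsonCompact (dualBall X)) (hN : IsEquivNorm N) :
    ∃ (Γ : Type u) (h : dualBallWrt N → Γ → ℝ), Continuous h ∧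
      Function.Injective h ∧ ∀ φ, {γ | h φ γ ≠ 0}.Countable := by
  obtain ⟨Γ, A, -, hA, ⟨e⟩⟩ := hX
  obtain ⟨C, hC, hb⟩ := hN.exists_bound
  -- Shrinking maps the dual ball of `(X, N)` into the original one.
  have hmem : ∀ φ : dualBallWrt N, C⁻¹ • (φ : WeakDual ℝ X) ∈ dualBall X := by
    intro φ x
    change |C⁻¹ * (φ : WeakDual ℝ X) x| ≤ ‖x‖
    rw [abs_mul, abs_of_pos (inv_pos.2 hC), inv_mul_le_iff₀ hC]
    exact (φ.2 x).trans (hb x)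
  have hcont : Continuous fun φ : dualBallWrt N => C⁻¹ • (φ : WeakDual ℝ X) :=
    (continuous_const_smul (C⁻¹ : ℝ)).comp continuous_subtype_val
  refine ⟨Γ, fun φ => e ⟨_, hmem φ⟩, ?_, fun φ ψ h => ?_, fun φ => hA _ (e _).2⟩
  · exact continuous_subtype_val.comp (e.continuous.comp (hcont.subtype_mk _))
  · exact Subtype.ext (smul_right_injective _ (inv_ne_zero hC.ne')
      (congrArg Subtype.val (e.injective (Subtype.ext h))))

theorem preimage_coe_closure_dualBallWrt {B : Set (WeakDual ℝ X)} (hB : B ⊆ dualBallWrt N) :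
    ((↑) ⁻¹' closure B : Set (dualBallWrt N)) = closure ((↑) ⁻¹' B) := by
  rw [Topology.IsEmbedding.subtypeVal.closure_eq_preimage_closure_image,
    Subtype.image_preimage_coe, inter_eq_right.2 hB]

theorem eq_zero_of_determined {Γ : Type*} {h : dualBallWrt N → Γ → ℝ} (hcont : Continuous h)
    (hinj : Function.Injective h) {B : Set (WeakDual ℝ X)} (hB : B ⊆ dualBallWrt N)
    (hB₀ : 0 ∈ B) {S : Set X}
    (hS : ∀ ψ (hψ : ψ ∈ B) γ, h ⟨ψ, hB hψ⟩ γ ≠ 0 → ∀ φ χ : dualBallWrt N,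
      (∀ x ∈ S, (φ : WeakDual ℝ X) x = (χ : WeakDual ℝ X) x) → h φ γ = h χ γ)
    {φ : WeakDual ℝ X} (hφ : φ ∈ closure B) (hφS : ∀ x ∈ S, φ x = 0) : φ = 0 := by
  have hφN : φ ∈ dualBallWrt N := closure_minimal hB isClosed_dualBallWrt hφ
  suffices h ⟨φ, hφN⟩ = h ⟨0, hB hB₀⟩ from congrArg Subtype.val (hinj this)
  funext γ
  by_cases hγ : ∃ ψ, ∃ hψ : ψ ∈ B, h ⟨ψ, hB hψ⟩ γ ≠ 0
  · obtain ⟨ψ, hψ, hne⟩ := hγ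
    exact hS ψ hψ γ hne _ _ hφS
  · push Not at hγ
    rw [hγ 0 hB₀]
    have hclosed : IsClosed {ψ : dualBallWrt N | h ψ γ = 0} :=
      isClosed_eq ((continuous_apply γ).comp hcont) continuous_const
    have hmem : (⟨φ, hφN⟩ : dualBallWrt N) ∈ closure (Subtype.val ⁻¹' B) :=
      preimage_coe_closure_dualBallWrt hB ▸ hφ
    exact hclosed.closure_subset_iff.2 (fun ψ hψ => hγ ψ hψ) hmem

theorem exists_projSystem_of_corson (hX : IsCorsonCompact (dualBall X)) (hN : IsEquivNorm N) :
    Nonempty (ProjSystem N PUnit.{u + 1}) := by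
  obtain ⟨Γ, h, hcont, hinj, hsupp⟩ := exists_sigma_embedding hX hN
  have := compactSpace_dualBallWrt hN
  choose S hSc hS using fun γ => exists_countable_determining
    (e := fun x (φ : dualBallWrt N) => (φ : WeakDual ℝ X) x) continuous_dualBallWrt_eval
    (fun _ _ => dualBallWrt_ext) ((continuous_apply γ).comp hcont)
  -- A functional in the system brings along vectors determining the coordinates in its support.
  let ex : SysObj X PUnit.{u + 1} → SysObj X PUnit.{u + 1} → Set (SysObj X PUnit.{u + 1}) :=
    fun a _ => match a with
      | .inr (.inl φ) => Sum.inl '' ⋃ hφ : φ ∈ dualBallWrt N, ⋃ γ ∈ {γ | h ⟨φ, hφ⟩ γ ≠ 0}, S γ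
      | _ => ∅
  refine ⟨⟨hN, ex, ?_, fun M hM φ hφ hφ₀ => ?_⟩⟩
  · rintro (_ | φ | _) _
    · exact countable_empty
    · exact (countable_iUnion fun hφ => (hsupp _).biUnion fun γ _ => hSc γ).image _
    · exact countable_empty
  · have hzero : 0 ∈ dualTrace N M :=
      ⟨zero_mem_dualBallWrt hN, OpClosed.base_subset hM (Or.inr rfl)⟩
    refine eq_zero_of_determined hcont hinj (fun ψ hψ => hψ.1) hzero
      (fun ψ hψ γ hne χ₁ χ₂ hχ => hS γ χ₁ χ₂ fun x hx => hχ x ?_) hφ hφ₀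
    refine OpClosed.op_subset hM (.inr (.inl ψ)) hψ.2 (.inr (.inl ψ)) hψ.2 (Or.inr ⟨x, ?_, rfl⟩)
    exact mem_iUnion.2 ⟨hψ.1, mem_biUnion hne hx⟩

theorem ProjSystem.has1ProjectionalSkeletonWrt [CompleteSpace X] {ι : Type u}
    (𝔖 : ProjSystem N ι) : Has1ProjectionalSkeletonWrt N := by
  refine ⟨{
    Γ := {M : Set (SysObj X ι) // M.Countable ∧ 𝔖.Closed M}
    ne := ⟨⟨𝔖.hull ∅, 𝔖.countable_hull countable_empty, 𝔖.closed_hull ∅⟩⟩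
    directed := fun M M' => ⟨⟨𝔖.hull (M ∪ M'), 𝔖.countable_hull (M.2.1.union M'.2.1),
      𝔖.closed_hull _⟩, subset_union_left.trans (𝔖.hull.le_closure _),
      subset_union_right.trans (𝔖.hull.le_closure _)⟩
    P := fun M => M.2.2.goodPair.proj
    idem := fun M x => M.2.2.goodPair.proj_eq_self (M.2.2.goodPair.proj_mem x)
    separable := fun M => ?_
    covers := fun x => ?_
    comp_eq_of_le := fun M M' h x =>
      ⟨M.2.2.goodPair.proj_comp_of_dual_subset M'.2.2.goodPair (dualTrace_mono h) x,
        M.2.2.goodPair.proj_comp_of_subset M'.2.2.goodPair (vectorTrace_mono h) x⟩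
    sup_seq := fun f hf => ?_ }, fun M x => M.2.2.goodPair.norm_proj_le x⟩
  · rw [GoodPair.range_proj]
    exact (M.2.1.preimage Sum.inl_injective).isSeparable.closure
  · refine ⟨⟨𝔖.hull {.inl x}, 𝔖.countable_hull (countable_singleton _), 𝔖.closed_hull _⟩, ?_⟩
    rw [GoodPair.range_proj]
    exact subset_closure (𝔖.hull.le_closure _ rfl)
  · have hclosed : 𝔖.Closed (⋃ n, (f n).1) :=
      𝔖.closed_iUnion (fun n => (f n).2.2) fun i j =>
        ⟨max i j, hf.monotone (le_max_left i j), hf.monotone (le_max_right i j)⟩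
    refine ⟨⟨⋃ n, (f n).1, countable_iUnion fun n => (f n).2.1, hclosed⟩, ⟨?_, ?_⟩, ?_⟩
    · exact forall_mem_range.2 fun n => subset_iUnion (fun n => (f n).1) n
    · exact fun M hM => iUnion_subset fun n => hM ⟨n, rfl⟩
    · simp only [GoodPair.range_proj, vectorTrace_iUnion]
      exact (closure_mono (iUnion_mono fun n => subset_closure)).antisymm
        (closure_minimal (iUnion_subset fun n => closure_mono
          (subset_iUnion (fun n => vectorTrace (f n).1) n)) isClosed_closure)

theorem has1ProjectionalSkeletonWrt_of_corson [CompleteSpace X] (hX : IsCorsonCompact (dualBall X))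
    (hN : IsEquivNorm N) : Has1ProjectionalSkeletonWrt N :=
  (exists_projSystem_of_corson hX hN).some.has1ProjectionalSkeletonWrt

end CorsonToProj

/-! ### Projectional skeletons yield retractional skeletons -/

attribute [instance] ProjectionalSkeleton.po ProjectionalSkeleton.ne RetractionalSkeleton.po
  RetractionalSkeleton.ne

section ProjToRetr

variable {X : Type u} [NormedAddCommGroup X] [NormedSpace ℝ X] {N : X → ℝ}

/-- The restriction to the dual ball of `(X, N)` of the adjoint of an operator of `N`-norm at most
one. -/
noncomputable def adjointOnBall (P : X →L[ℝ] X) (hP : ∀ x, N (P x) ≤ N x) :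
    C(dualBallWrt N, dualBallWrt N) where
  toFun φ := ⟨StrongDual.toWeakDual ((WeakDual.toStrongDual (φ : WeakDual ℝ X)).comp P),
    fun x => (φ.2 (P x)).trans (hP x)⟩
  continuous_toFun := by
    refine Continuous.subtype_mk (WeakDual.continuous_of_continuous_eval fun x => ?_) _
    exact continuous_dualBallWrt_eval (P x)

theorem adjointOnBall_apply (P : X →L[ℝ] X) (hP : ∀ x, N (P x) ≤ N x) (φ : dualBallWrt N) (x : X) :
    (adjointOnBall P hP φ : WeakDual ℝ X) x = (φ : WeakDual ℝ X) (P x) := rfl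

theorem metrizableSpace_range_adjointOnBall (hN : IsEquivNorm N) {P : X →L[ℝ] X}
    (hP : ∀ x, N (P x) ≤ N x) (hidem : ∀ x, P (P x) = P x) (hsep : IsSeparable (range P)) :
    MetrizableSpace (range (adjointOnBall P hP)) := by
  obtain ⟨c, hc, hsub⟩ := hsep
  have := hc.to_subtype
  have := compactSpace_dualBallWrt hN
  have : CompactSpace (range (adjointOnBall P hP)) :=
    isCompact_iff_compactSpace.1 (isCompact_range (adjointOnBall P hP).continuous)
  let e : range (adjointOnBall P hP) → c → ℝ := fun φ x => (φ.1 : WeakDual ℝ X) x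
  have he : Continuous e :=
    continuous_pi fun x => (continuous_dualBallWrt_eval (x : X)).comp continuous_subtype_val
  have hinj : Function.Injective e := by
    rintro ⟨_, φ, rfl⟩ ⟨_, ψ, rfl⟩ heq
    refine Subtype.ext (dualBallWrt_ext fun x => ?_)
    have heq' : EqOn (adjointOnBall P hP φ : WeakDual ℝ X) (adjointOnBall P hP ψ : WeakDual ℝ X)
        (closure c) :=
      EqOn.closure (fun y hy => congrFun heq ⟨y, hy⟩) (ContinuousLinearMap.continuous _)
        (ContinuousLinearMap.continuous _)
    simpa only [adjointOnBall_apply, hidem] using heq' (hsub ⟨x, rfl⟩)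
  have : MetrizableSpace (c → ℝ) := metrizableSpace_of_t3_secondCountable _
  exact (he.isClosedEmbedding hinj).isEmbedding.metrizableSpace

theorem ProjectionalSkeleton.tendsto_seq (𝔰 : ProjectionalSkeleton X) (hN : IsEquivNorm N)
    (hP : ∀ s x, N (𝔰.P s x) ≤ N x) {f : ℕ → 𝔰.Γ} (hf : Monotone f) {t : 𝔰.Γ} (ht : ∀ n, f n ≤ t)
    (hrange : range (𝔰.P t) ⊆ closure (⋃ n, range (𝔰.P (f n)))) (x : X) :
    Tendsto (fun n => N (𝔰.P (f n) x - 𝔰.P t x)) atTop (𝓝 0) := by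
  rw [Metric.tendsto_atTop]
  intro ε hε
  have hnear : ∀ᶠ y in 𝓝 (𝔰.P t x), N (𝔰.P t x - y) < ε / 2 := by
    have hcont : Continuous fun y => N (𝔰.P t x - y) := hN.continuous.comp (by fun_prop)
    refine hcont.continuousAt.eventually (gt_mem_nhds ?_)
    simpa only [sub_self, hN.map_zero] using half_pos hε
  obtain ⟨y, hy, hlt⟩ :=
    ((mem_closure_iff_frequently.1 (hrange ⟨x, rfl⟩)).and_eventually hnear).exists
  obtain ⟨n, z, rfl⟩ := mem_iUnion.1 hy
  refine ⟨n, fun m hm => ?_⟩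
  have hPx : 𝔰.P (f m) (𝔰.P t x) = 𝔰.P (f m) x := (𝔰.comp_eq_of_le _ _ (ht m) x).1
  have hPz : 𝔰.P (f m) (𝔰.P (f n) z) = 𝔰.P (f n) z := (𝔰.comp_eq_of_le _ _ (hf hm) z).2
  rw [Real.dist_eq, sub_zero, abs_of_nonneg (hN.nonneg _)]
  calc N (𝔰.P (f m) x - 𝔰.P t x)
      = N (𝔰.P (f m) (𝔰.P t x - 𝔰.P (f n) z) + (𝔰.P (f n) z - 𝔰.P t x)) := by
        rw [map_sub, hPx, hPz, sub_add_sub_cancel]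
    _ ≤ N (𝔰.P (f m) (𝔰.P t x - 𝔰.P (f n) z)) + N (𝔰.P (f n) z - 𝔰.P t x) := hN.2.1 _ _
    _ ≤ N (𝔰.P t x - 𝔰.P (f n) z) + N (𝔰.P t x - 𝔰.P (f n) z) :=
        add_le_add (hP _ _) (hN.map_sub_rev _ _).le
    _ < ε := by linarith

theorem hasRetractionalSkeleton_of_has1ProjectionalSkeletonWrt (hN : IsEquivNorm N)
    (h : Has1ProjectionalSkeletonWrt N) : HasRetractionalSkeleton (dualBallWrt N) := by
  obtain ⟨𝔰, hP⟩ := h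
  refine ⟨{
    Γ := 𝔰.Γ
    directed := 𝔰.directed
    r := fun s => adjointOnBall (𝔰.P s) (hP s)
    isRetraction := fun s φ => dualBallWrt_ext fun x => by
      simp only [adjointOnBall_apply, 𝔰.idem]
    metrizable := fun s =>
      metrizableSpace_range_adjointOnBall hN (hP s) (𝔰.idem s) (𝔰.separable s)
    tendsto_id := fun φ => tendsto_dualBallWrt_iff.2 fun x => ?_
    comp_eq_of_le := fun s t hst φ =>
      ⟨dualBallWrt_ext fun x => by simp only [adjointOnBall_apply, (𝔰.comp_eq_of_le s t hst x).2],
        dualBallWrt_ext fun x => by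
          simp only [adjointOnBall_apply, (𝔰.comp_eq_of_le s t hst x).1]⟩
    sup_seq := fun f hf => ?_ }⟩
  · obtain ⟨s, y, rfl⟩ := 𝔰.covers x
    refine tendsto_const_nhds.congr' ?_
    filter_upwards [eventually_ge_atTop s] with t ht
    rw [adjointOnBall_apply, (𝔰.comp_eq_of_le s t ht y).2]
  · obtain ⟨t, ht, hrange⟩ := 𝔰.sup_seq f hf
    refine ⟨t, ht, fun φ => tendsto_dualBallWrt_iff.2 fun x => ?_⟩
    simp only [adjointOnBall_apply]
    rw [tendsto_iff_dist_tendsto_zero]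
    refine squeeze_zero (fun _ => dist_nonneg) (fun n => ?_)
      (𝔰.tendsto_seq hN hP hf.monotone (fun n => ht.1 ⟨n, rfl⟩) hrange.le x)
    rw [Real.dist_eq, ← map_sub]
    exact φ.2 _

end ProjToRetr

/-! ### Retractional skeletons -/

theorem exists_strictMono_subseq {α : Type*} [PartialOrder α] {f : ℕ → α} (hf : Monotone f)
    (hlt : ∀ n, ∃ m, f n < f m) {u : ℕ → ℕ} (hu : Tendsto u atTop atTop) :
    ∃ v : ℕ → ℕ, StrictMono v ∧ StrictMono fun n => f (u (v n)) := by
  have hstep : ∀ a, ∃ b, a < b ∧ f (u a) < f (u b) := fun a => by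
    obtain ⟨m, hm⟩ := hlt (u a)
    obtain ⟨b, hb, hab⟩ := ((hu.eventually_ge_atTop m).and (eventually_gt_atTop a)).exists
    exact ⟨b, hab, hm.trans_le (hf hb)⟩
  choose b hb hfb using hstep
  have hsucc : ∀ n, b^[n + 1] 0 = b (b^[n] 0) := fun n => Function.iterate_succ_apply' b n 0
  refine ⟨fun n => b^[n] 0, strictMono_nat_of_lt_succ fun n => ?_,
    strictMono_nat_of_lt_succ fun n => ?_⟩
  · exact hsucc n ▸ hb _
  · simp only [hsucc]
    exact hfb _

theorem exists_monotone_ge {α : Type*} [Preorder α] {I : Set α} (hI : DirectedOn (· ≤ ·) I)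
    {f : ℕ → α} (hf : ∀ n, f n ∈ I) : ∃ g : ℕ → α, Monotone g ∧ ∀ n, g n ∈ I ∧ f n ≤ g n := by
  choose! ub hub hleft hright using hI
  let g : ℕ → α := fun n => Nat.rec (f 0) (fun n s => ub s (f (n + 1))) n
  have hg : ∀ n, g n ∈ I := fun n => by
    induction n with
    | zero => exact hf 0
    | succ n ih => exact hub _ ih _ (hf _)
  refine ⟨g, monotone_nat_of_le_succ fun n => hleft _ (hg n) _ (hf _), fun n => ⟨hg n, ?_⟩⟩
  cases n with
  | zero => exact le_rfl
  | succ n => exact hright _ (hg n) _ (hf _)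

namespace RetractionalSkeleton

variable {K : Type u} [TopologicalSpace K] (𝔰 : RetractionalSkeleton K)

theorem sup_seq_of_monotone {f : ℕ → 𝔰.Γ} (hf : Monotone f) :
    ∃ t : 𝔰.Γ, IsLUB (range f) t ∧ ∀ x, Tendsto (fun n => 𝔰.r (f n) x) atTop (𝓝 (𝔰.r t x)) := by
  by_cases hmax : ∃ n, ∀ m, ¬f n < f m
  · obtain ⟨n, hn⟩ := hmax
    have hconst : ∀ m, n ≤ m → f m = f n := fun m hm =>
      ((hf hm).lt_or_eq.resolve_left (hn m)).symm
    refine ⟨f n, IsGreatest.isLUB ⟨⟨n, rfl⟩, forall_mem_range.2 fun m => ?_⟩, fun x => ?_⟩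
    · exact (hf (le_max_right n m)).trans (hconst _ (le_max_left n m)).le
    · exact tendsto_const_nhds.congr' <|
        (eventually_ge_atTop n).mono fun m hm => by simp only [hconst m hm]
  push Not at hmax
  have hsub : ∀ u : ℕ → ℕ, Tendsto u atTop atTop → ∃ v : ℕ → ℕ, ∃ t, IsLUB (range f) t ∧
      ∀ x, Tendsto (fun n => 𝔰.r (f (u (v n))) x) atTop (𝓝 (𝔰.r t x)) := by
    intro u hu
    obtain ⟨v, hv, hfv⟩ := exists_strictMono_subseq hf hmax hu
    obtain ⟨t, ht, hlim⟩ := 𝔰.sup_seq _ hfv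
    refine ⟨v, t, ⟨forall_mem_range.2 fun n => ?_, fun c hc => ht.2 ?_⟩, hlim⟩
    · obtain ⟨k, hk⟩ := ((hu.comp hv.tendsto_atTop).eventually_ge_atTop n).exists
      exact (hf hk).trans (ht.1 ⟨k, rfl⟩)
    · exact forall_mem_range.2 fun n => hc ⟨_, rfl⟩
  obtain ⟨-, t, ht, -⟩ := hsub id Filter.tendsto_id
  refine ⟨t, ht, fun x => tendsto_of_subseq_tendsto fun u hu => ?_⟩
  obtain ⟨v, t', ht', hlim⟩ := hsub u hu
  exact ⟨v, ht.unique ht' ▸ hlim x⟩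

theorem exists_forall_le {ι : Type v} [Countable ι] (f : ι → 𝔰.Γ) : ∃ t, ∀ i, f i ≤ t := by
  rcases isEmpty_or_nonempty ι with h | h
  · exact ⟨Classical.arbitrary _, fun i => h.elim i⟩
  obtain ⟨e, he⟩ := exists_surjective_nat ι
  obtain ⟨g, hg, hfg⟩ := exists_monotone_ge (I := univ)
    (fun s _ t _ => (𝔰.directed s t).imp fun _ h => ⟨mem_univ _, h⟩) fun n => mem_univ (f (e n))
  obtain ⟨t, ht, -⟩ := 𝔰.sup_seq_of_monotone hg
  exact ⟨t, he.forall.2 fun n => (hfg n).2.trans (ht.1 ⟨n, rfl⟩)⟩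

-- The net of values converges in a metric space, and countable sets of indices are bounded.
theorem exists_forall_ge_apply_eq {g : K → ℝ} (hg : Continuous g) (x : K) :
    ∃ s₀, ∀ s, s₀ ≤ s → g (𝔰.r s x) = g x := by
  have hnear : ∀ n : ℕ, ∃ s₀, ∀ s, s₀ ≤ s → dist (g (𝔰.r s x)) (g x) < 1 / ((n : ℝ) + 1) := by
    intro n
    have hlim : Tendsto (fun s => g (𝔰.r s x)) atTop (𝓝 (g x)) :=
      (hg.tendsto x).comp (𝔰.tendsto_id x)
    have : IsDirectedOrder 𝔰.Γ := ⟨𝔰.directed⟩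
    exact eventually_atTop.1 (hlim.eventually (Metric.ball_mem_nhds _ Nat.one_div_pos_of_nat))
  choose s₀ hs₀ using hnear
  obtain ⟨t, ht⟩ := 𝔰.exists_forall_le s₀
  refine ⟨t, fun s hs => dist_le_zero.1 ?_⟩
  exact ge_of_tendsto' tendsto_one_div_add_atTop_nhds_zero_nat fun n =>
    (hs₀ n s ((ht n).trans hs)).le

theorem mem_inducedSet {x : K} : x ∈ 𝔰.inducedSet ↔ ∃ s, 𝔰.r s x = x := by
  simp only [inducedSet, mem_iUnion]
  exact exists_congr fun s => ⟨fun ⟨y, hy⟩ => hy ▸ 𝔰.isRetraction s y, fun h => ⟨x, h⟩⟩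

variable {𝔰} in
theorem apply_eq_of_le {x : K} {s t : 𝔰.Γ} (h : s ≤ t) (hx : 𝔰.r s x = x) : 𝔰.r t x = x := by
  rw [← hx]
  exact (𝔰.comp_eq_of_le s t h x).2

theorem exists_countable_mem_closure_image {x : K} {A : Set K} (hxA : x ∈ closure A) (s : 𝔰.Γ) :
    ∃ C ⊆ A, C.Countable ∧ 𝔰.r s x ∈ closure (𝔰.r s '' C) := by
  have := 𝔰.metrizable s
  have hmem : rangeFactorization (𝔰.r s) x ∈ closure (rangeFactorization (𝔰.r s) '' A) :=
    mem_closure_image ((𝔰.r s).continuous.rangeFactorization).continuousAt hxA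
  obtain ⟨v, hv, hlim⟩ := mem_closure_iff_seq_limit.1 hmem
  choose c hc hcv using hv
  refine ⟨range c, range_subset_iff.2 hc, countable_range c, ?_⟩
  refine mem_closure_of_tendsto ((continuous_subtype_val.tendsto _).comp hlim)
    (Eventually.of_forall fun n => ?_)
  exact ⟨c n, ⟨n, rfl⟩, congrArg Subtype.val (hcv n)⟩

variable [T2Space K]

theorem isClosed_fixedPoints (s : 𝔰.Γ) : IsClosed {x | 𝔰.r s x = x} :=
  isClosed_eq (𝔰.r s).continuous continuous_id

theorem exists_forall_closure_eq {A : Set K} (hA : A.Countable) (hD : A ⊆ 𝔰.inducedSet) :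
    ∃ t, ∀ a ∈ closure A, 𝔰.r t a = a := by
  have := hA.to_subtype
  choose s hs using fun a : A => 𝔰.mem_inducedSet.1 (hD a.2)
  obtain ⟨t, ht⟩ := 𝔰.exists_forall_le s
  exact ⟨t, closure_minimal (fun x hx => apply_eq_of_le (ht ⟨x, hx⟩) (hs ⟨x, hx⟩))
    (𝔰.isClosed_fixedPoints t)⟩

variable {𝔰} in
theorem mem_of_forall_mem_image {F : Set K} (hF : IsCompact F) {f : ℕ → 𝔰.Γ} (hf : Monotone f)
    {t : 𝔰.Γ} (hlim : ∀ y, Tendsto (fun n => 𝔰.r (f n) y) atTop (𝓝 (𝔰.r t y)))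
    (hFt : ∀ y ∈ F, 𝔰.r t y = y) {x : K} (hx : 𝔰.r (f 0) x = x)
    (hxF : ∀ n, x ∈ 𝔰.r (f n) '' F) : x ∈ F := by
  let G : ℕ → Set K := fun n => F ∩ {y | 𝔰.r (f n) y = x}
  have hG : ∀ n, IsClosed (G n) := fun n =>
    hF.isClosed.inter (isClosed_eq (𝔰.r (f n)).continuous continuous_const)
  have hanti : ∀ n, G (n + 1) ⊆ G n := fun n y hy => by
    refine ⟨hy.1, ?_⟩
    have hcomp := (𝔰.comp_eq_of_le _ _ (hf n.le_succ) y).1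
    rw [Nat.succ_eq_add_one, hy.2, apply_eq_of_le (hf n.zero_le) hx] at hcomp
    exact hcomp.symm
  obtain ⟨y, hy⟩ := IsCompact.nonempty_iInter_of_sequence_nonempty_isCompact_isClosed G hanti
    hxF (hF.of_isClosed_subset (hG 0) inter_subset_left) hG
  rw [mem_iInter] at hy
  have hty : 𝔰.r t y = x := tendsto_nhds_unique (hlim y)
    (tendsto_const_nhds.congr fun n => (hy n).2.symm)
  exact hty ▸ (hFt y (hy 0).1).symm ▸ (hy 0).1

theorem exists_countable_mem_closure [CompactSpace K] {x : K} (hx : x ∈ 𝔰.inducedSet) {A : Set K}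
    (hA : A ⊆ 𝔰.inducedSet) (hxA : x ∈ closure A) : ∃ C ⊆ A, C.Countable ∧ x ∈ closure C := by
  choose C hCA hCc hxC using 𝔰.exists_countable_mem_closure_image hxA
  have hnext : ∀ s, ∃ t, s ≤ t ∧ ∀ a ∈ C s, 𝔰.r t a = a := by
    intro s
    obtain ⟨t, ht⟩ := 𝔰.exists_forall_closure_eq (hCc s) ((hCA s).trans hA)
    obtain ⟨w, hsw, htw⟩ := 𝔰.directed s t
    exact ⟨w, hsw, fun a ha => apply_eq_of_le htw (ht a (subset_closure ha))⟩
  choose next hle hfix using hnext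
  obtain ⟨s₀, hs₀⟩ := 𝔰.mem_inducedSet.1 hx
  let f : ℕ → 𝔰.Γ := fun n => next^[n] s₀
  have hsucc : ∀ n, f (n + 1) = next (f n) := fun n => Function.iterate_succ_apply' next n s₀
  have hf : Monotone f := monotone_nat_of_le_succ fun n => hsucc n ▸ hle _
  obtain ⟨t, ht, hlim⟩ := 𝔰.sup_seq_of_monotone hf
  refine ⟨⋃ n, C (f n), iUnion_subset fun n => hCA _, countable_iUnion fun n => hCc _, ?_⟩
  have hfix_t : ∀ a ∈ ⋃ n, C (f n), 𝔰.r t a = a := fun a ha => by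
    obtain ⟨n, hn⟩ := mem_iUnion.1 ha
    exact apply_eq_of_le (ht.1 ⟨n + 1, rfl⟩) (hsucc n ▸ hfix _ a hn)
  refine mem_of_forall_mem_image isClosed_closure.isCompact hf hlim
    (closure_minimal hfix_t (𝔰.isClosed_fixedPoints t)) hs₀ fun n => ?_
  have hxn : x ∈ closure (𝔰.r (f n) '' C (f n)) := by
    simpa only [apply_eq_of_le (hf n.zero_le) hs₀] using hxC (f n)
  exact closure_minimal (image_mono ((subset_iUnion (fun n => C (f n)) n).trans subset_closure))
    (isClosed_closure.isCompact.image (𝔰.r (f n)).continuous).isClosed hxn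

theorem eq_of_forall_apply_eq [CompactSpace K] {I : Set 𝔰.Γ} (hI : DirectedOn (· ≤ ·) I)
    {B : Set K} (hB : ∀ b ∈ B, ∃ s ∈ I, 𝔰.r s b = b) {x y : K} (hxD : x ∈ 𝔰.inducedSet)
    (hyD : y ∈ 𝔰.inducedSet) (hx : x ∈ closure B) (hy : y ∈ closure B)
    (h : ∀ s ∈ I, 𝔰.r s x = 𝔰.r s y) : x = y := by
  have hBD : B ⊆ 𝔰.inducedSet := fun b hb =>
    𝔰.mem_inducedSet.2 ((hB b hb).imp fun _ hs => hs.2)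
  obtain ⟨C, hCB, hC, hxC⟩ := 𝔰.exists_countable_mem_closure hxD hBD hx
  obtain ⟨C', hCB', hC', hyC'⟩ := 𝔰.exists_countable_mem_closure hyD hBD hy
  obtain ⟨e, he⟩ := (hC.union hC').exists_eq_range ((closure_nonempty_iff.1 ⟨x, hxC⟩).inl)
  have heB : ∀ n, e n ∈ B := fun n => union_subset hCB hCB' (he ▸ mem_range_self n)
  choose s hsI hs using fun n => hB (e n) (heB n)
  obtain ⟨g, hg, hsg⟩ := exists_monotone_ge hI hsI
  obtain ⟨t, ht, hlim⟩ := 𝔰.sup_seq_of_monotone hg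
  have hfix : ∀ z ∈ closure (C ∪ C'), 𝔰.r t z = z := by
    refine closure_minimal (he ▸ forall_mem_range.2 fun n => ?_) (𝔰.isClosed_fixedPoints t)
    exact apply_eq_of_le ((hsg n).2.trans (ht.1 ⟨n, rfl⟩)) (hs n)
  calc x = 𝔰.r t x := (hfix x (closure_mono subset_union_left hxC)).symm
    _ = 𝔰.r t y := tendsto_nhds_unique (hlim x)
        ((hlim y).congr fun n => (h (g n) (hsg n).1).symm)
    _ = y := hfix y (closure_mono subset_union_right hyC')

end RetractionalSkeleton

/-! ### A dual ball with a full retractional skeleton is Corson -/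

section FullToCorson

variable {X : Type u} [NormedAddCommGroup X] [NormedSpace ℝ X] {N : X → ℝ}

/-- Countable tightness of the dual ball of `(X, N)`. -/
def TightBall (N : X → ℝ) : Prop :=
  ∀ B ⊆ dualBallWrt N, ∀ φ ∈ closure B, ∃ C ⊆ B, C.Countable ∧ φ ∈ closure C

theorem tightBall_of_full (hN : IsEquivNorm N) (𝔰 : RetractionalSkeleton (dualBallWrt N))
    (hfull : ∀ φ, φ ∈ 𝔰.inducedSet) : TightBall N := by
  have := compactSpace_dualBallWrt hN
  intro B hB φ hφ
  have hφN : φ ∈ dualBallWrt N := closure_minimal hB isClosed_dualBallWrt hφ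
  have hmem : (⟨φ, hφN⟩ : dualBallWrt N) ∈ closure (Subtype.val ⁻¹' B) :=
    preimage_coe_closure_dualBallWrt hB ▸ hφ
  obtain ⟨C, hCB, hC, hφC⟩ := 𝔰.exists_countable_mem_closure (hfull _) (fun _ _ => hfull _) hmem
  refine ⟨(↑) '' C, image_subset_iff.2 hCB, hC.image _, ?_⟩
  exact image_closure_subset_closure_image continuous_subtype_val ⟨_, hφC, rfl⟩

theorem exists_projSystem_of_full (hN : IsEquivNorm N) (𝔰 : RetractionalSkeleton (dualBallWrt N))
    (hfull : ∀ φ, φ ∈ 𝔰.inducedSet) : Nonempty (ProjSystem N 𝔰.Γ) := by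
  have := compactSpace_dualBallWrt hN
  choose σ hσ using fun φ => 𝔰.mem_inducedSet.1 (hfull φ)
  choose ub hleft hright using 𝔰.directed
  have := 𝔰.metrizable
  choose S hSc hS using fun s => exists_countable_determining
    (e := fun x (φ : dualBallWrt N) => (φ : WeakDual ℝ X) x) continuous_dualBallWrt_eval
    (fun _ _ => dualBallWrt_ext) (𝔰.r s).continuous.rangeFactorization
  -- A functional brings along an index fixing it, an index vectors determining its retraction.
  let ex : SysObj X 𝔰.Γ → SysObj X 𝔰.Γ → Set (SysObj X 𝔰.Γ) := fun a b => match a, b with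
    | .inr (.inl φ), _ => ⋃ hφ : φ ∈ dualBallWrt N, {.inr (.inr (σ ⟨φ, hφ⟩))}
    | .inr (.inr s), .inr (.inr t) => insert (.inr (.inr (ub s t))) (Sum.inl '' S s)
    | _, _ => ∅
  refine ⟨⟨hN, ex, ?_, fun M hM φ hφ hφ₀ => ?_⟩⟩
  · rintro (x | φ | s) (_ | _ | t)
    all_goals first
      | exact countable_empty
      | exact countable_iUnion fun _ => countable_singleton _
      | exact ((hSc _).image _).insert _
  have hex : ∀ {a b}, a ∈ M → b ∈ M → ex a b ⊆ M := fun ha hb =>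
    subset_union_right.trans (OpClosed.op_subset hM _ ha _ hb)
  let I : Set 𝔰.Γ := {s | .inr (.inr s) ∈ M}
  have hdir : DirectedOn (· ≤ ·) I := fun s hs t ht =>
    ⟨ub s t, hex hs ht (mem_insert _ _), hleft s t, hright s t⟩
  have hfix : ∀ ψ : dualBallWrt N, (ψ : WeakDual ℝ X) ∈ dualTrace N M → ∃ s ∈ I, 𝔰.r s ψ = ψ :=
    fun ψ hψ => ⟨σ ψ, hex hψ.2 hψ.2 (mem_iUnion.2 ⟨ψ.2, rfl⟩), hσ ψ⟩
  have hzero : 0 ∈ dualTrace N M :=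
    ⟨zero_mem_dualBallWrt hN, OpClosed.base_subset hM (Or.inr rfl)⟩
  have hsub : dualTrace N M ⊆ dualBallWrt N := fun ψ hψ => hψ.1
  refine congrArg Subtype.val (𝔰.eq_of_forall_apply_eq hdir hfix
    (hfull ⟨φ, closure_dualTrace_subset M hφ⟩) (hfull ⟨0, hzero.1⟩) ?_ (subset_closure hzero)
    fun s hs => congrArg Subtype.val (hS s _ _ fun x hx => ?_))
  · exact preimage_coe_closure_dualBallWrt hsub ▸ hφ
  · exact hφ₀ x (hex hs hs (Or.inr ⟨x, hx, rfl⟩))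

theorem IsEquivNorm.exists_smul_mem_dualBallWrt (hN : IsEquivNorm N) (φ : WeakDual ℝ X) :
    ∃ c : ℝ, c ≠ 0 ∧ c • φ ∈ dualBallWrt N := by
  obtain ⟨-, -, c, C, hc, h⟩ := hN
  have hpos : 0 < ‖WeakDual.toStrongDual φ‖ + 1 := by positivity
  refine ⟨c / (‖WeakDual.toStrongDual φ‖ + 1), by positivity, fun x => ?_⟩
  change |c / (‖WeakDual.toStrongDual φ‖ + 1) * φ x| ≤ N x
  rw [abs_mul, abs_of_pos (by positivity), div_mul_eq_mul_div, div_le_iff₀ hpos]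
  calc c * |φ x| ≤ c * ((‖WeakDual.toStrongDual φ‖ + 1) * ‖x‖) := by
        gcongr
        exact ((WeakDual.toStrongDual φ).le_opNorm x).trans (by gcongr; simp)
    _ = c * ‖x‖ * (‖WeakDual.toStrongDual φ‖ + 1) := by ring
    _ ≤ N x * (‖WeakDual.toStrongDual φ‖ + 1) := by gcongr; exact (h x).1

theorem exists_subset_countable_lt {I : Type*} [LinearOrder I] [WellFoundedLT I] {J : Set I}
    (hJ : ¬J.Countable) :
    ∃ J' ⊆ J, J'.Nonempty ∧ ∀ C ⊆ J', C.Countable → ∃ a ∈ J', ∀ c ∈ C, c < a := by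
  obtain ⟨J', hJ'J, hJ', hinit⟩ :
      ∃ J' ⊆ J, ¬J'.Countable ∧ ∀ a ∈ J', (J' ∩ Iio a).Countable := by
    by_cases h : ∃ a, ¬(J ∩ Iio a).Countable
    · obtain ⟨a, ha, hmin⟩ := wellFounded_lt.has_min {a | ¬(J ∩ Iio a).Countable} h
      refine ⟨J ∩ Iio a, inter_subset_left, ha, fun b hb => by_contra fun hcon => hmin b ?_ hb.2⟩
      exact fun hc => hcon (hc.mono (inter_subset_inter_left _ inter_subset_left))
    · push Not at h
      exact ⟨J, subset_rfl, hJ, fun a _ => h a⟩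
  refine ⟨J', hJ'J, nonempty_iff_ne_empty.2 ?_, fun C hC hCc => ?_⟩
  · rintro rfl
    exact hJ' countable_empty
  by_contra! hcon
  refine hJ' (((hCc.biUnion fun c hc => hinit c (hC hc)).union hCc).mono fun a ha => ?_)
  obtain ⟨c, hc, hac⟩ := hcon a ha
  exact hac.lt_or_eq.imp (fun hlt => mem_biUnion hc ⟨ha, hlt⟩) fun h => mem_of_eq_of_mem h hc

/-- `G` generates a closed subspace containing `S`, and every functional vanishes at all but
countably many elements of `G`. -/
def IsSigmaGenerating (G S : Set X) : Prop :=
  S ⊆ (Submodule.span ℝ G).topologicalClosure ∧ ∀ φ : WeakDual ℝ X, {g ∈ G | φ g ≠ 0}.Countable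

theorem isCorsonCompact_of_isSigmaGenerating (hN : IsEquivNorm N) {G : Set X}
    (hG : IsSigmaGenerating G univ) : IsCorsonCompact (dualBallWrt N) := by
  have := compactSpace_dualBallWrt hN
  let h : dualBallWrt N → G → ℝ := fun φ g => (φ : WeakDual ℝ X) g
  have hcont : Continuous h := continuous_pi fun g => continuous_dualBallWrt_eval (g : X)
  have hinj : Function.Injective h := fun φ ψ heq => by
    refine dualBallWrt_ext fun x => ?_
    have hspan : EqOn (φ : WeakDual ℝ X) (ψ : WeakDual ℝ X) (Submodule.span ℝ G) :=
      LinearMap.eqOn_span (f := (φ : WeakDual ℝ X).toLinearMap)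
        (g := (ψ : WeakDual ℝ X).toLinearMap) fun g hg => congrFun heq ⟨g, hg⟩
    exact hspan.closure (ContinuousLinearMap.continuous _) (ContinuousLinearMap.continuous _)
      (hG.1 (mem_univ x))
  refine ⟨G, range h, isCompact_range hcont, forall_mem_range.2 fun φ => ?_,
    ⟨(hcont.isClosedEmbedding hinj).isEmbedding.toHomeomorph⟩⟩
  exact ((hG.2 φ).preimage Subtype.val_injective).mono fun g hg =>
    (⟨g.2, hg⟩ : (g : X) ∈ G ∧ (φ : WeakDual ℝ X) g ≠ 0)

variable {ι : Type u} {𝔖 : ProjSystem N ι}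

/-- Sets closed under the operations of `𝔖` increasing along a linear order, where `lower a` and
`upper a` play the roles of the stages before and after the step `a`. -/
structure ClosedChain (𝔖 : ProjSystem N ι) (I : Type*) [LinearOrder I] where
  upper : I → Set (SysObj X ι)
  lower : I → Set (SysObj X ι)
  base : Set (SysObj X ι)
  closed_upper : ∀ a, 𝔖.Closed (upper a)
  closed_lower : ∀ a, 𝔖.Closed (lower a)
  countable_base : base.Countable
  lower_subset_upper : ∀ a, lower a ⊆ upper a
  upper_subset_lower : ∀ a b, a < b → upper a ⊆ lower b
  lower_subset : ∀ a, lower a ⊆ base ∪ ⋃ b < a, upper b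

namespace ClosedChain

variable {I : Type*} [LinearOrder I] (𝔠 : ClosedChain 𝔖 I)

theorem monotone_upper : Monotone 𝔠.upper := fun a b hab => by
  rcases hab.eq_or_lt with rfl | h
  · exact subset_rfl
  · exact (𝔠.upper_subset_lower a b h).trans (𝔠.lower_subset_upper b)

theorem directed_upper (J : Set I) : Directed (· ⊆ ·) fun a : J => 𝔠.upper a :=
  fun a b => (le_total a b).elim (fun h => ⟨b, 𝔠.monotone_upper h, subset_rfl⟩)
    fun h => ⟨a, subset_rfl, 𝔠.monotone_upper h⟩

variable [CompleteSpace X]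

/-- The difference of the projections at the two stages of the step `a`. -/
noncomputable def increment (a : I) : X →L[ℝ] X :=
  (𝔠.closed_upper a).goodPair.proj - (𝔠.closed_lower a).goodPair.proj

theorem increment_apply (a : I) (x : X) : 𝔠.increment a x =
    (𝔠.closed_upper a).goodPair.proj x - (𝔠.closed_lower a).goodPair.proj x := rfl

theorem apply_increment_eq_zero {M : Set (SysObj X ι)} (hM : 𝔖.Closed M) {φ : WeakDual ℝ X} {a : I}
    (haM : 𝔠.upper a ⊆ M)
    (hφ : StrongDual.toWeakDual ((WeakDual.toStrongDual φ).comp hM.goodPair.proj) ∈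
      closure (dualTrace N (𝔠.lower a))) (x : X) : φ (𝔠.increment a x) = 0 := by
  set ψ := StrongDual.toWeakDual ((WeakDual.toStrongDual φ).comp hM.goodPair.proj)
  have hψ : ∀ {S B} (h : GoodPair N S B), S ⊆ vectorTrace M → ψ ∈ closure B →
      φ (h.proj x) = ψ x := fun h hS hψB =>
    (congrArg φ (h.proj_comp_of_subset hM.goodPair hS x)).symm.trans (h.apply_proj hψB x)
  have hlower := 𝔠.lower_subset_upper a
  rw [increment_apply, map_sub, sub_eq_zero,
    hψ _ (vectorTrace_mono haM) (closure_mono (dualTrace_mono hlower) hφ),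
    hψ _ (vectorTrace_mono (hlower.trans haM)) hφ]

theorem countable_increment_ne_zero [WellFoundedLT I] (hT : TightBall N) (φ : WeakDual ℝ X) :
    {a | ∃ x, φ (𝔠.increment a x) ≠ 0}.Countable := by
  wlog hφ : φ ∈ dualBallWrt N generalizing φ
  · obtain ⟨c, hc, hcφ⟩ := 𝔖.isEquivNorm.exists_smul_mem_dualBallWrt φ
    refine (this (c • φ) hcφ).mono ?_
    exact fun a ⟨x, hx⟩ => ⟨x, mul_ne_zero hc hx⟩
  by_contra hJ
  obtain ⟨J, hJsub, hJne, hbdd⟩ := exists_subset_countable_lt hJ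
  have := hJne.to_subtype
  have hM : 𝔖.Closed (⋃ a : J, 𝔠.upper a) :=
    𝔖.closed_iUnion (fun a => 𝔠.closed_upper a) (𝔠.directed_upper J)
  -- By tightness the composition of `φ` with the projection at `M` is seen before some step in `J`.
  obtain ⟨C, hCsub, hC, hψC⟩ := hT _ (fun χ hχ => hχ.1) _
    (hM.goodPair.mem_closure_of_eq_comp_proj
      (ψ := StrongDual.toWeakDual ((WeakDual.toStrongDual φ).comp hM.goodPair.proj)) hφ
      fun x => rfl)
  choose α hα using fun χ : C => mem_iUnion.1 (hCsub χ.2).2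
  have := hC.to_subtype
  obtain ⟨a, haJ, ha⟩ := hbdd (range fun χ => (α χ : I)) (range_subset_iff.2 fun χ => (α χ).2)
    (countable_range _)
  have hCa : C ⊆ dualTrace N (𝔠.lower a) := fun χ hχ =>
    ⟨(hCsub hχ).1, 𝔠.upper_subset_lower _ _ (ha _ ⟨⟨χ, hχ⟩, rfl⟩) (hα ⟨χ, hχ⟩)⟩
  obtain ⟨x, hx⟩ := hJsub haJ
  exact hx (𝔠.apply_increment_eq_zero hM (subset_iUnion (fun a : J => 𝔠.upper a) ⟨a, haJ⟩)
    (closure_mono hCa hψC) x)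

theorem vectorTrace_upper_subset [WellFoundedLT I] {W : Submodule ℝ X} (hW : IsClosed (W : Set X))
    (hbase : vectorTrace 𝔠.base ⊆ W) {G : I → Set X}
    (hG : ∀ a, vectorTrace (𝔠.upper a) ⊆ (Submodule.span ℝ (G a)).topologicalClosure)
    (hGW : ∀ a, ∀ g ∈ G a, 𝔠.increment a g ∈ W) (a : I) : vectorTrace (𝔠.upper a) ⊆ W := by
  induction a using WellFoundedLT.induction with
  | ind a ih =>
  have hlower : vectorTrace (𝔠.lower a) ⊆ W := by
    intro x hx
    rcases 𝔠.lower_subset a hx with hx | hx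
    · exact hbase hx
    · obtain ⟨b, hb, hx⟩ := mem_iUnion₂.1 hx
      exact ih b hb hx
  have hspan : (Submodule.span ℝ (G a)).topologicalClosure ≤
      W.comap ((𝔠.closed_upper a).goodPair.proj : X →ₗ[ℝ] X) := by
    refine Submodule.topologicalClosure_minimal _ (Submodule.span_le.2 fun g hg => ?_)
      (hW.preimage (𝔠.closed_upper a).goodPair.proj.continuous)
    have hproj : (𝔠.closed_lower a).goodPair.proj g ∈ W :=
      closure_minimal hlower hW ((𝔠.closed_lower a).goodPair.proj_mem g)
    have hadd := W.add_mem (hGW a g hg) hproj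
    rwa [increment_apply, sub_add_cancel] at hadd
  intro x hx
  have hmem : (𝔠.closed_upper a).goodPair.proj x ∈ W := hspan (hG a hx)
  rwa [(𝔠.closed_upper a).goodPair.proj_eq_self (subset_closure hx)] at hmem

theorem exists_isSigmaGenerating [WellFoundedLT I] (hT : TightBall N)
    (hG : ∀ a, ∃ G, IsSigmaGenerating G (vectorTrace (𝔠.upper a))) :
    ∃ G, IsSigmaGenerating G (⋃ a, vectorTrace (𝔠.upper a)) := by
  choose G hspan hG using hG
  refine ⟨vectorTrace 𝔠.base ∪ ⋃ a, 𝔠.increment a '' G a, ?_, fun φ => ?_⟩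
  · have hsub := Submodule.subset_span.trans (Submodule.le_topologicalClosure
      (Submodule.span ℝ (vectorTrace 𝔠.base ∪ ⋃ a, 𝔠.increment a '' G a)))
    exact iUnion_subset (𝔠.vectorTrace_upper_subset (Submodule.isClosed_topologicalClosure _)
      (subset_union_left.trans hsub) hspan
      fun a g hg => hsub (Or.inr (mem_iUnion.2 ⟨a, g, hg, rfl⟩)))
  · have hbase : (vectorTrace 𝔠.base).Countable := 𝔠.countable_base.preimage Sum.inl_injective
    have hincr : ∀ a, {g ∈ G a | φ (𝔠.increment a g) ≠ 0}.Countable := fun a =>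
      hG a (StrongDual.toWeakDual ((WeakDual.toStrongDual φ).comp (𝔠.increment a)))
    refine (hbase.union ((𝔠.countable_increment_ne_zero hT φ).biUnion fun a _ =>
      (hincr a).image (𝔠.increment a))).mono ?_
    rintro _ ⟨hx | hx, hne⟩
    · exact Or.inl hx
    · obtain ⟨a, g, hg, rfl⟩ := mem_iUnion.1 hx
      exact Or.inr (mem_biUnion (x := a) ⟨g, hne⟩ ⟨g, ⟨hg, hne⟩, rfl⟩)

end ClosedChain

/-- The chain of the hulls of the initial segments of a well-ordered family of objects. -/
noncomputable def ProjSystem.chain (𝔖 : ProjSystem N ι) {I : Type*} [LinearOrder I]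
    (e : I → SysObj X ι) : ClosedChain 𝔖 I where
  upper a := 𝔖.hull (e '' Iic a)
  lower a := 𝔖.hull (e '' Iio a)
  base := 𝔖.hull ∅
  closed_upper a := 𝔖.closed_hull _
  closed_lower a := 𝔖.closed_hull _
  countable_base := 𝔖.countable_hull countable_empty
  lower_subset_upper a := 𝔖.hull.monotone (image_mono Iio_subset_Iic_self)
  upper_subset_lower a b hab := 𝔖.hull.monotone (image_mono (Iic_subset_Iio.2 hab))
  lower_subset a := by
    rcases (Iio a).eq_empty_or_nonempty with h | h
    · rw [h, image_empty]
      exact subset_union_left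
    have := h.to_subtype
    refine subset_union_of_subset_right (opHull_subset ?_ ?_) _
    · have hunion : ⋃ b < a, 𝔖.hull (e '' Iic b) = ⋃ b : Iio a, 𝔖.hull (e '' Iic (b : I)) :=
        biUnion_eq_iUnion (Iio a) fun b _ => 𝔖.hull (e '' Iic b)
      rw [hunion]
      refine 𝔖.closed_iUnion (fun b => 𝔖.closed_hull _) fun b c => ?_
      rcases le_total b c with h | h
      · exact ⟨c, 𝔖.hull.monotone (image_mono (Iic_subset_Iic.2 h)), subset_rfl⟩
      · exact ⟨b, subset_rfl, 𝔖.hull.monotone (image_mono (Iic_subset_Iic.2 h))⟩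
    · rintro _ ⟨b, hb, rfl⟩
      exact mem_iUnion₂.2 ⟨b, hb, 𝔖.hull.le_closure _ ⟨b, mem_Iic.2 le_rfl, rfl⟩⟩

theorem mk_chain_upper_lt {κ : Cardinal.{u}} (hκ : Cardinal.aleph0 < κ)
    (e : κ.ord.ToType → SysObj X ι) (a : κ.ord.ToType) :
    Cardinal.mk ((𝔖.chain e).upper a) < κ := by
  refine (𝔖.mk_hull_le _).trans_lt (max_lt hκ (Cardinal.mk_image_le.trans_lt ?_))
  rw [← Iio_insert]
  refine Cardinal.mk_insert_le.trans_lt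
    (Cardinal.add_lt_of_lt hκ.le ?_ (Cardinal.one_lt_aleph0.trans hκ))
  have hlt := Cardinal.mk_Iio_lt a (by rw [Cardinal.mk_ord_toType, Ordinal.type_toType])
  rwa [Cardinal.mk_ord_toType] at hlt

variable [CompleteSpace X]

theorem exists_isSigmaGenerating (𝔖 : ProjSystem N ι) (hT : TightBall N)
    (M : Set (SysObj X ι)) : ∃ G, IsSigmaGenerating G (vectorTrace M) := by
  induction hκ : Cardinal.mk M using WellFoundedLT.induction generalizing M with
  | ind κ ih =>
  rcases le_or_gt κ Cardinal.aleph0 with hle | hlt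
  · have hM : M.Countable := by rwa [← Cardinal.le_aleph0_iff_set_countable, hκ]
    exact ⟨vectorTrace M, Submodule.subset_span.trans (Submodule.le_topologicalClosure _),
      fun φ => (hM.preimage Sum.inl_injective).mono fun x hx => hx.1⟩
  obtain ⟨e⟩ := Cardinal.eq.1 ((Cardinal.mk_ord_toType κ).trans hκ.symm)
  let 𝔠 := 𝔖.chain fun a => (e a : SysObj X ι)
  obtain ⟨G, hspan, hG⟩ := 𝔠.exists_isSigmaGenerating hT
    fun a => ih _ (mk_chain_upper_lt hlt _ a) _ rfl
  refine ⟨G, fun x hx => hspan ?_, hG⟩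
  obtain ⟨a, ha⟩ := e.surjective (⟨.inl x, hx⟩ : M)
  exact mem_iUnion.2 ⟨a, 𝔖.hull.le_closure _ ⟨a, mem_Iic.2 le_rfl, congrArg Subtype.val ha⟩⟩

theorem isCorsonCompact_of_full (hN : IsEquivNorm N) (𝔰 : RetractionalSkeleton (dualBallWrt N))
    (hfull : ∀ φ, φ ∈ 𝔰.inducedSet) : IsCorsonCompact (dualBallWrt N) := by
  obtain ⟨𝔖⟩ := exists_projSystem_of_full hN 𝔰 hfull
  obtain ⟨G, hG⟩ := exists_isSigmaGenerating 𝔖 (tightBall_of_full hN 𝔰 hfull) univ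
  exact isCorsonCompact_of_isSigmaGenerating hN hG

end FullToCorson

/-! ### Long sequences of functionals -/

section OmegaOne

/-- The initial ordinal `ω₁`, as a well-ordered type: the index set of long sequences. -/
abbrev OmegaOne : Type := (Cardinal.aleph 1).ord.ToType

namespace OmegaOne

theorem countable_Iic (a : OmegaOne) : (Iic a).Countable := by
  rw [← Iio_insert]
  refine Set.Countable.insert _ ?_
  have h := Cardinal.mk_Iio_lt a (by rw [Cardinal.mk_ord_toType, Ordinal.type_toType])
  rw [← Cardinal.le_aleph0_iff_set_countable, ← Order.lt_succ_iff, Cardinal.succ_aleph0]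
  exact h.trans_eq (Cardinal.mk_ord_toType _)

theorem exists_gt_of_countable {C : Set OmegaOne} (hC : C.Countable) : ∃ a, ∀ c ∈ C, c < a := by
  by_contra! hcon
  have huniv : (univ : Set OmegaOne).Countable :=
    (hC.biUnion fun c _ => countable_Iic c).mono fun a _ => mem_iUnion₂.2 (by simpa using hcon a)
  rw [← Cardinal.le_aleph0_iff_set_countable, Cardinal.mk_univ, Cardinal.mk_ord_toType] at huniv
  exact huniv.not_gt Cardinal.aleph0_lt_aleph_one

instance : Nonempty OmegaOne :=
  (exists_gt_of_countable countable_empty).nonempty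

theorem exists_forall_ge_dist_le {T : Type*} [PseudoMetricSpace T] {v : OmegaOne → T}
    (hv : ∀ a : ℕ → OmegaOne, Monotone a → ∃ l, Tendsto (fun k => v (a k)) atTop (𝓝 l)) {δ : ℝ}
    (hδ : 0 < δ) : ∃ η, ∀ ξ, η ≤ ξ → dist (v ξ) (v η) ≤ δ := by
  by_contra! hcon
  choose b hle hlt using hcon
  let a : ℕ → OmegaOne := fun k => b^[k] (Classical.arbitrary _)
  have ha : ∀ k, a (k + 1) = b (a k) := fun k => Function.iterate_succ_apply' b k _
  obtain ⟨l, hl⟩ := hv a (monotone_nat_of_le_succ fun k => by rw [ha]; exact hle _)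
  have hdist : Tendsto (fun k => dist (v (a (k + 1))) (v (a k))) atTop (𝓝 0) := by
    simpa using ((tendsto_add_atTop_iff_nat 1).2 hl).dist hl
  obtain ⟨k, hk⟩ := (hdist.eventually (gt_mem_nhds hδ)).exists
  rw [ha] at hk
  exact hk.not_gt (hlt (a k))

theorem exists_forall_ge_eq {T : Type*} [MetricSpace T] {v : OmegaOne → T}
    (hv : ∀ a : ℕ → OmegaOne, Monotone a → ∃ l, Tendsto (fun k => v (a k)) atTop (𝓝 l)) :
    ∃ η, ∀ ξ, η ≤ ξ → v ξ = v η := by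
  choose η hη using fun m : ℕ => exists_forall_ge_dist_le hv (Nat.one_div_pos_of_nat (n := m))
  obtain ⟨a, ha⟩ := exists_gt_of_countable (countable_range η)
  refine ⟨a, fun ξ hξ => dist_le_zero.1 ?_⟩
  have hbound : ∀ m : ℕ, dist (v ξ) (v a) ≤ 1 / ((m : ℝ) + 1) + 1 / ((m : ℝ) + 1) := fun m => by
    have hm := (ha _ ⟨m, rfl⟩).le
    exact (dist_triangle_right _ _ (v (η m))).trans
      (add_le_add (hη m ξ (hm.trans hξ)) (hη m a hm))
  have hlim := tendsto_one_div_add_atTop_nhds_zero_nat (𝕜 := ℝ)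
  simpa using ge_of_tendsto' (hlim.add hlim) hbound

end OmegaOne

end OmegaOne

namespace RetractionalSkeleton

variable {K : Type u} [TopologicalSpace K] (𝔰 : RetractionalSkeleton K)

theorem tendsto_of_interlacing {f g : ℕ → 𝔰.Γ} (hle : ∀ n, f n ≤ g n)
    (hge : ∀ n, g n ≤ f (n + 1)) {t : 𝔰.Γ} (ht : IsLUB (range f) t) (x : K) :
    Tendsto (fun n => 𝔰.r (g n) x) atTop (𝓝 (𝔰.r t x)) := by
  obtain ⟨t', ht', hlim⟩ := 𝔰.sup_seq_of_monotone
    (monotone_nat_of_le_succ fun n => (hge n).trans (hle (n + 1)))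
  have hg : IsLUB (range g) t := by
    refine ⟨forall_mem_range.2 fun n => (hge n).trans (ht.1 ⟨_, rfl⟩), fun b hb => ht.2 ?_⟩
    exact forall_mem_range.2 fun n => (hle n).trans (hb ⟨n, rfl⟩)
  rw [hg.unique ht']
  exact hlim x

theorem exists_long_monotone (s₀ : 𝔰.Γ) (σ : 𝔰.Γ → 𝔰.Γ) : ∃ l : OmegaOne → 𝔰.Γ,
    Monotone l ∧ (∀ ξ, s₀ ≤ l ξ) ∧ ∀ η ξ, η < ξ → σ (l η) ≤ l ξ := by
  have hstep : ∀ (ξ : OmegaOne) (ih : ∀ η, η < ξ → 𝔰.Γ), ∃ t, s₀ ≤ t ∧ ∀ η (h : η < ξ),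
      ih η h ≤ t ∧ σ (ih η h) ≤ t := by
    intro ξ ih
    have : Countable (Iio ξ) := ((OmegaOne.countable_Iic ξ).mono Iio_subset_Iic_self).to_subtype
    obtain ⟨t₁, h₁⟩ := 𝔰.exists_forall_le fun η : Iio ξ => ih η η.2
    obtain ⟨t₂, h₂⟩ := 𝔰.exists_forall_le fun η : Iio ξ => σ (ih η η.2)
    obtain ⟨t, ht⟩ := 𝔰.exists_forall_le ![s₀, t₁, t₂]
    exact ⟨t, ht 0, fun η h => ⟨(h₁ ⟨η, h⟩).trans (ht 1), (h₂ ⟨η, h⟩).trans (ht 2)⟩⟩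
  choose step hbase hstep using hstep
  let l : OmegaOne → 𝔰.Γ := wellFounded_lt.fix step
  have hl : ∀ ξ, l ξ = step ξ fun η _ => l η := fun ξ => wellFounded_lt.fix_eq step ξ
  have hlt : ∀ η ξ, η < ξ → l η ≤ l ξ ∧ σ (l η) ≤ l ξ := fun η ξ h => by
    rw [hl ξ]
    exact hstep ξ (fun η _ => l η) η h
  refine ⟨l, fun η ξ h => ?_, fun ξ => hl ξ ▸ hbase _ _, fun η ξ h => (hlt η ξ h).2⟩
  rcases h.eq_or_lt with rfl | h
  · exact le_rfl
  · exact (hlt η ξ h).1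

theorem exists_eventual_value [CompactSpace K] {l : OmegaOne → 𝔰.Γ} (hl : Monotone l) (p : K) :
    ∃ q, ∀ g : K → ℝ, Continuous g → ∃ η, ∀ ξ, η ≤ ξ → g (𝔰.r (l ξ) p) = g q := by
  obtain ⟨q, hq⟩ := exists_clusterPt_of_compactSpace (map (fun ξ => 𝔰.r (l ξ) p) atTop)
  refine ⟨q, fun g hg => ?_⟩
  obtain ⟨η, hη⟩ := OmegaOne.exists_forall_ge_eq (v := fun ξ => g (𝔰.r (l ξ) p)) fun a ha => by
    obtain ⟨t, -, ht⟩ := 𝔰.sup_seq_of_monotone (hl.comp ha)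
    exact ⟨_, (hg.tendsto _).comp (ht p)⟩
  have hmem : g q = g (𝔰.r (l η) p) := by
    have hcl : IsClosed {x | g x = g (𝔰.r (l η) p)} := isClosed_eq hg continuous_const
    refine isClosed_iff_clusterPt.1 hcl q (hq.mono (le_principal_iff.2 ?_))
    exact (eventually_ge_atTop η).mono fun ξ hξ => hη ξ hξ
  exact ⟨η, fun ξ hξ => (hη ξ hξ).trans hmem.symm⟩

end RetractionalSkeleton

section LongSequence

variable {X : Type u} [NormedAddCommGroup X] [NormedSpace ℝ X] {N : X → ℝ}

theorem exists_apply_eq_sub_of_notMem_inducedSet (𝔰 : RetractionalSkeleton (dualBallWrt N))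
    {p : dualBallWrt N} (hp : p ∉ 𝔰.inducedSet) (t : 𝔰.Γ) (δ : ℝ) :
    ∃ f, (𝔰.r t p : WeakDual ℝ X) f = (p : WeakDual ℝ X) f - δ := by
  obtain ⟨f, hf⟩ : ∃ f, (𝔰.r t p : WeakDual ℝ X) f ≠ (p : WeakDual ℝ X) f := by
    by_contra! h
    exact hp (𝔰.mem_inducedSet.2 ⟨t, dualBallWrt_ext h⟩)
  have hd : (p : WeakDual ℝ X) f - (𝔰.r t p : WeakDual ℝ X) f ≠ 0 := sub_ne_zero.2 hf.symm
  refine ⟨(δ / ((p : WeakDual ℝ X) f - (𝔰.r t p : WeakDual ℝ X) f)) • f, ?_⟩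
  simp only [map_smul, smul_eq_mul]
  field_simp
  ring

theorem exists_uniform_drop (𝔰 : RetractionalSkeleton (dualBallWrt N)) {p : dualBallWrt N}
    (hp : p ∉ 𝔰.inducedSet) : ∃ n : ℕ, ∃ γ, ∀ l, γ ≤ l → ∃ f : X, ‖f‖ ≤ n ∧
      ∀ s, γ ≤ s → s ≤ l → (𝔰.r s p : WeakDual ℝ X) f ≤ (p : WeakDual ℝ X) f - 1 := by
  -- Failures for the bounds `n = 0, 1, 2, …` produce an increasing sequence of indices and,
  -- interlaced with it, indices `s` at which `r s p` is close to `p`: their suprema agree.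
  by_contra! hcon
  choose L hL hfail using hcon
  let g : ℕ → 𝔰.Γ := fun n => Nat.rec (Classical.arbitrary _) L n
  have hg : Monotone g := monotone_nat_of_le_succ fun n => hL n (g n)
  obtain ⟨t, ht, -⟩ := 𝔰.sup_seq_of_monotone hg
  obtain ⟨f, hf⟩ := exists_apply_eq_sub_of_notMem_inducedSet 𝔰 hp t 2
  have hs : ∀ k, ∃ s, g k ≤ s ∧ s ≤ g (k + 1) ∧
      (‖f‖ ≤ k → (p : WeakDual ℝ X) f - 1 < (𝔰.r s p : WeakDual ℝ X) f) := by
    intro k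
    by_cases hk : ‖f‖ ≤ k
    · obtain ⟨s, hge, hle, hlt⟩ := hfail k (g k) f hk
      exact ⟨s, hge, hle, fun _ => hlt⟩
    · exact ⟨g k, le_rfl, hg (Nat.le_succ k), fun h => absurd h hk⟩
  choose s hge hle hlt using hs
  obtain ⟨k₀, hk₀⟩ := exists_nat_ge ‖f‖
  have hlim := tendsto_dualBallWrt_iff.1 (𝔰.tendsto_of_interlacing hge hle ht p) f
  have hclose : (p : WeakDual ℝ X) f - 1 ≤ (𝔰.r t p : WeakDual ℝ X) f := by
    refine ge_of_tendsto hlim ?_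
    filter_upwards [eventually_ge_atTop k₀] with k hk
    exact (hlt k (hk₀.trans (by exact_mod_cast hk))).le
  linarith

/-- A bounded long sequence `d` of functionals which vanishes on `W`, is eventually zero at every
vector, and is triangular with respect to the long sequence `F` of vectors. -/
structure LongSeq (W : Set X) where
  d : OmegaOne → WeakDual ℝ X
  F : OmegaOne → X
  bound : ℝ
  one_le_bound : 1 ≤ bound
  abs_d_le : ∀ ξ x, |d ξ x| ≤ 2 * ‖x‖
  abs_d_F_le : ∀ ξ η, |d ξ (F η)| ≤ bound
  d_F_le_neg_one : ∀ ξ η, ξ ≤ η → d ξ (F η) ≤ -1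
  d_F_eq_zero : ∀ ξ η, η < ξ → d ξ (F η) = 0
  eventually_zero : ∀ x, ∃ η, ∀ ξ, η ≤ ξ → d ξ x = 0
  d_eq_zero : ∀ w ∈ W, ∀ ξ, d ξ w = 0

variable {𝔰 : RetractionalSkeleton (dualBallWrt fun x : X => ‖x‖)}
  {p q : dualBallWrt fun x : X => ‖x‖} {l : OmegaOne → 𝔰.Γ} {F : OmegaOne → X} {n : ℝ}

theorem nonempty_longSeq_of_eventual_value
    (hq : ∀ x, ∃ η, ∀ ξ, η ≤ ξ → (𝔰.r (l ξ) p : WeakDual ℝ X) x = (q : WeakDual ℝ X) x)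
    (hn : ∀ η, ‖F η‖ ≤ n) (hdrop : ∀ ξ η, ξ ≤ η →
      (𝔰.r (l ξ) p : WeakDual ℝ X) (F η) ≤ (p : WeakDual ℝ X) (F η) - 1)
    (hfix : ∀ η ξ, η < ξ → (𝔰.r (l ξ) p : WeakDual ℝ X) (F η) = (p : WeakDual ℝ X) (F η))
    {W : Set X} (hW : ∀ w ∈ W, ∀ ξ, (𝔰.r (l ξ) p : WeakDual ℝ X) w = (p : WeakDual ℝ X) w) :
    Nonempty (LongSeq W) := by
  have hqp : ∀ x η, (∀ ξ, η < ξ → (𝔰.r (l ξ) p : WeakDual ℝ X) x = (p : WeakDual ℝ X) x) →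
      (q : WeakDual ℝ X) x = (p : WeakDual ℝ X) x := by
    intro x η hx
    obtain ⟨ζ, hζ⟩ := hq x
    obtain ⟨a, ha⟩ := OmegaOne.exists_gt_of_countable ((countable_singleton η).insert ζ)
    rw [← hζ a (ha ζ (mem_insert _ _)).le, hx a (ha η (mem_insert_of_mem _ rfl))]
  have hqF : ∀ η, (q : WeakDual ℝ X) (F η) = (p : WeakDual ℝ X) (F η) := fun η =>
    hqp (F η) η (hfix η)
  have hsub : ∀ ξ x, ((𝔰.r (l ξ) p : WeakDual ℝ X) - (q : WeakDual ℝ X)) x =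
      (𝔰.r (l ξ) p : WeakDual ℝ X) x - (q : WeakDual ℝ X) x := fun _ _ => rfl
  have habs : ∀ ξ x, |((𝔰.r (l ξ) p : WeakDual ℝ X) - (q : WeakDual ℝ X)) x| ≤ 2 * ‖x‖ :=
    fun ξ x => by
      rw [hsub, two_mul]
      exact (abs_sub _ _).trans (add_le_add ((𝔰.r (l ξ) p).2 x) (q.2 x))
  refine ⟨{
    d := fun ξ => (𝔰.r (l ξ) p : WeakDual ℝ X) - (q : WeakDual ℝ X)
    F := F
    bound := max 1 (2 * n)
    one_le_bound := le_max_left _ _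
    abs_d_le := habs
    abs_d_F_le := fun ξ η => (habs ξ _).trans (le_max_of_le_right (by linarith [hn η]))
    d_F_le_neg_one := fun ξ η h => by rw [hsub, hqF]; linarith [hdrop ξ η h]
    d_F_eq_zero := fun ξ η h => by rw [hsub, hqF, hfix η ξ h, sub_self]
    eventually_zero := fun x => ?_
    d_eq_zero := fun w hw ξ => ?_ }⟩
  · obtain ⟨η, hη⟩ := hq x
    exact ⟨η, fun ξ hξ => by rw [hsub, hη ξ hξ, sub_self]⟩
  · rw [hsub, hW w hw, hqp w ξ fun ξ' _ => hW w hw ξ', sub_self]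

/-- The sequence consists of the differences of `r (l ξ) p` and the limit of these functionals, for
a long increasing sequence `l` of indices. -/
theorem nonempty_longSeq_of_notMem_inducedSet (hp : p ∉ 𝔰.inducedSet) {W : Set X}
    (hW : W.Countable) : Nonempty (LongSeq W) := by
  have := compactSpace_dualBallWrt (isEquivNorm_norm (X := X))
  have := hW.to_subtype
  choose σ hσ using fun x : X => 𝔰.exists_forall_ge_apply_eq (continuous_dualBallWrt_eval x) p
  obtain ⟨n, γ, hdrop⟩ := exists_uniform_drop 𝔰 hp
  choose! f hf hfdrop using hdrop
  obtain ⟨s₁, hs₁⟩ := 𝔰.exists_forall_le fun w : W => σ w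
  obtain ⟨s₀, hγ, hs₁₀⟩ := 𝔰.directed γ s₁
  obtain ⟨l, hl, hs₀, hlσ⟩ := 𝔰.exists_long_monotone s₀ fun s => σ (f s)
  obtain ⟨q, hq⟩ := 𝔰.exists_eventual_value hl p
  have hγl : ∀ ξ, γ ≤ l ξ := fun ξ => hγ.trans (hs₀ ξ)
  exact nonempty_longSeq_of_eventual_value (fun x => hq _ (continuous_dualBallWrt_eval x))
    (fun η => hf (l η) (hγl η)) (fun ξ η h => hfdrop (l η) (hγl η) (l ξ) (hγl ξ) (hl h))
    (fun η ξ h => hσ _ _ (hlσ η ξ h))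
    fun w hw ξ => hσ w _ ((hs₁ ⟨w, hw⟩).trans (hs₁₀.trans (hs₀ ξ)))

end LongSequence

/-! ### A renorming adapted to a long sequence -/

section SupNorm

variable {X : Type u} [NormedAddCommGroup X] [NormedSpace ℝ X]

theorem isEquivNorm_supSeminorm {B : Set (WeakDual ℝ X)} {R ε : ℝ} (hε : 0 < ε)
    (hR : B ⊆ dualBallWrt fun x => R * ‖x‖)
    (hB : ∀ φ ∈ dualBallWrt (fun x : X => ‖x‖), ε • φ ∈ B) : IsEquivNorm (supSeminorm B) := by
  refine ⟨map_smul_eq_mul _, map_add_le_add _, ε, R, hε, fun x => ⟨?_, ?_⟩⟩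
  · obtain ⟨φ, hφ, hφx⟩ := (isEquivNorm_norm (X := X)).exists_norming x
    calc ε * ‖x‖ = ε * φ x := by rw [hφx]
      _ ≤ |(ε • φ) x| := le_abs_self _
      _ ≤ supSeminorm B x := abs_le_supSeminorm hR (hB φ hφ) x
  · have hzero := hB 0 (zero_mem_dualBallWrt isEquivNorm_norm)
    exact supSeminorm_le hR ((abs_nonneg _).trans (hR hzero x)) fun φ hφ => hR hφ x

end SupNorm

/-- Two vectors and two functionals biorthogonal to them. -/
structure BiorthPair (X : Type u) [NormedAddCommGroup X] [NormedSpace ℝ X] where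
  w₁ : X
  w₃ : X
  e₁ : WeakDual ℝ X
  e₃ : WeakDual ℝ X
  e₁_w₁ : e₁ w₁ = 1
  e₁_w₃ : e₁ w₃ = 0
  e₃_w₁ : e₃ w₁ = 0
  e₃_w₃ : e₃ w₃ = 1

section Circle

theorem abs_le_one_of_sq_add_sq_eq_one {c s : ℝ} (h : c ^ 2 + s ^ 2 = 1) : |c| ≤ 1 ∧ |s| ≤ 1 := by
  constructor <;> rw [← sq_le_one_iff_abs_le_one] <;> linarith [sq_nonneg c, sq_nonneg s]

theorem circle_sq_le {c s c' s' t u v τ : ℝ} (hcs : c ^ 2 + s ^ 2 = 1) (hcs' : c' ^ 2 + s' ^ 2 = 1)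
    (ht : 0 < t) (hτ : c * u + s * v ≤ τ) (hz : 1 / 2 ≤ 1 + t * τ) :
    (c' * (c + t * u) + s' * (s + t * v)) ^ 2 ≤ (1 + t * τ + t ^ 2 * (u ^ 2 + v ^ 2)) ^ 2 := by
  have hA : 0 ≤ t ^ 2 * (u ^ 2 + v ^ 2) := by positivity
  have hcross : 0 ≤ t ^ 2 * (u ^ 2 + v ^ 2) * (1 / 2 + t * τ) := mul_nonneg hA (by linarith)
  calc (c' * (c + t * u) + s' * (s + t * v)) ^ 2
      = (c' ^ 2 + s' ^ 2) * ((c + t * u) ^ 2 + (s + t * v) ^ 2) -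
          (c' * (s + t * v) - s' * (c + t * u)) ^ 2 := by ring
    _ ≤ (c + t * u) ^ 2 + (s + t * v) ^ 2 := by
      rw [hcs', one_mul]
      exact sub_le_self _ (sq_nonneg _)
    _ = (c ^ 2 + s ^ 2) + 2 * (t * (c * u + s * v)) + t ^ 2 * (u ^ 2 + v ^ 2) := by ring
    _ ≤ 1 + 2 * (t * τ) + t ^ 2 * (u ^ 2 + v ^ 2) := by rw [hcs]; gcongr
    _ ≤ 1 + 2 * (t * τ) + t ^ 2 * (u ^ 2 + v ^ 2) + ((t * τ) ^ 2 +
          (t ^ 2 * (u ^ 2 + v ^ 2)) ^ 2 + 2 * (t ^ 2 * (u ^ 2 + v ^ 2) * (1 / 2 + t * τ))) :=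
      le_add_of_nonneg_right (by positivity)
    _ = (1 + t * τ + t ^ 2 * (u ^ 2 + v ^ 2)) ^ 2 := by ring

theorem eventually_add_mul_lt {a b : ℝ} (hab : a < b) (R : ℝ) :
    ∀ᶠ t in 𝓝[>] (0 : ℝ), a + t * R < b := by
  have hcont : Continuous fun t : ℝ => a + t * R := by fun_prop
  have hlim := (hcont.tendsto 0).mono_left (nhdsWithin_le_nhds (s := Ioi 0))
  exact hlim.eventually (gt_mem_nhds (by simpa using hab))

end Circle

namespace BiorthPair

variable {X : Type u} [NormedAddCommGroup X] [NormedSpace ℝ X]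

theorem nonempty_of_forall_exists_ne_smul (h : ∀ w : X, ∃ w', ∀ c : ℝ, w' ≠ c • w) :
    Nonempty (BiorthPair X) := by
  obtain ⟨w₃, h₃⟩ := h 0
  have hw₃ : w₃ ≠ 0 := by simpa using h₃ 0
  obtain ⟨w, hw⟩ := h w₃
  obtain ⟨e₃, he₃⟩ := SeparatingDual.exists_eq_one (R := ℝ) hw₃
  obtain ⟨g, hg⟩ := SeparatingDual.exists_eq_one (R := ℝ) (sub_ne_zero.2 (hw (e₃ w)))
  have h₃₁ : e₃ (w - e₃ w • w₃) = 0 := by simp [he₃]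
  refine ⟨⟨w - e₃ w • w₃, w₃, StrongDual.toWeakDual (g - g w₃ • e₃), StrongDual.toWeakDual e₃,
    ?_, ?_, h₃₁, he₃⟩⟩
  · change g (w - e₃ w • w₃) - g w₃ * e₃ (w - e₃ w • w₃) = 1
    rw [h₃₁, hg, mul_zero, sub_zero]
  · change g w₃ - g w₃ * e₃ w₃ = 0
    rw [he₃, mul_one, sub_self]

variable (b : BiorthPair X)

/-- The point with coordinates `(c, s)` in the plane spanned by `w₃` and `w₁`. -/
def vector (c s : ℝ) : X := c • b.w₃ + s • b.w₁

/-- The point with coordinates `(c, s)` in the plane spanned by `e₃` and `e₁`. -/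
noncomputable def functional (c s : ℝ) : WeakDual ℝ X := c • b.e₃ + s • b.e₁

theorem functional_apply (c s : ℝ) (x : X) : b.functional c s x = c * b.e₃ x + s * b.e₁ x := rfl

theorem e₁_vector (c s : ℝ) : b.e₁ (b.vector c s) = s := by simp [vector, b.e₁_w₁, b.e₁_w₃]

theorem e₃_vector (c s : ℝ) : b.e₃ (b.vector c s) = c := by simp [vector, b.e₃_w₁, b.e₃_w₃]

theorem functional_one_zero : b.functional 1 0 = b.e₃ := by simp [functional]

theorem vector_one_zero : b.vector 1 0 = b.w₃ := by simp [vector]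

theorem norm_vector_le {c s : ℝ} (h : c ^ 2 + s ^ 2 = 1) : ‖b.vector c s‖ ≤ ‖b.w₃‖ + ‖b.w₁‖ := by
  obtain ⟨hc, hs⟩ := abs_le_one_of_sq_add_sq_eq_one h
  refine (norm_add_le _ _).trans (add_le_add ?_ ?_) <;> rw [norm_smul]
  · exact mul_le_of_le_one_left (norm_nonneg _) hc
  · exact mul_le_of_le_one_left (norm_nonneg _) hs

/-- A radius so small that the functionals of norm at most `radius` do not attain the new norm near
the unit circle of the plane spanned by `w₃` and `w₁`. -/
noncomputable def radius : ℝ := 1 / (2 * (‖b.w₃‖ + ‖b.w₁‖ + 1))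

theorem radius_pos : 0 < b.radius := by
  unfold radius
  positivity

theorem radius_mul_le : b.radius * (‖b.w₃‖ + ‖b.w₁‖) ≤ 1 / 2 := by
  rw [radius, div_mul_eq_mul_div, div_le_iff₀ (by positivity)]
  linarith

variable {b} {c s τ : ℝ} {x : X}

theorem eventually_functional_le (hcs : c ^ 2 + s ^ 2 = 1) (hτ : b.functional c s x ≤ τ) :
    ∀ᶠ t in 𝓝[>] (0 : ℝ), ∀ c' s', c' ^ 2 + s' ^ 2 = 1 →
      |b.functional c' s' (b.vector c s + t • x)| ≤
        1 + t * τ + t ^ 2 * (b.e₃ x ^ 2 + b.e₁ x ^ 2) := by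
  filter_upwards [self_mem_nhdsWithin,
    eventually_add_mul_lt (a := -1) (b := -1 / 2) (by norm_num) (-τ)] with t (ht : 0 < t) hsmall
    c' s' hcs'
  have hval : b.functional c' s' (b.vector c s + t • x) =
      c' * (c + t * b.e₃ x) + s' * (s + t * b.e₁ x) := by
    simp only [functional_apply, map_add, map_smul, smul_eq_mul, e₁_vector, e₃_vector]
    ring
  have hA : 0 ≤ t ^ 2 * (b.e₃ x ^ 2 + b.e₁ x ^ 2) := by positivity
  rw [hval]
  exact abs_le_of_sq_le_sq (circle_sq_le hcs hcs' ht hτ (by linarith)) (by linarith)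

theorem eventually_radius_smul_le (hcs : c ^ 2 + s ^ 2 = 1) (x : X) (τ : ℝ) :
    ∀ᶠ t in 𝓝[>] (0 : ℝ), ∀ χ ∈ dualBallWrt (fun x : X => ‖x‖),
      |(b.radius • χ) (b.vector c s + t • x)| ≤ 1 + t * τ := by
  filter_upwards [self_mem_nhdsWithin,
    eventually_add_mul_lt (a := 1 / 2) (b := 1) (by norm_num) (b.radius * ‖x‖ - τ)]
    with t (ht : 0 < t) hsmall χ hχ
  have hr := b.radius_pos
  have hnorm : ‖b.vector c s + t • x‖ ≤ (‖b.w₃‖ + ‖b.w₁‖) + t * ‖x‖ := by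
    refine (norm_add_le _ _).trans (add_le_add (b.norm_vector_le hcs) ?_)
    rw [norm_smul, Real.norm_of_nonneg ht.le]
  calc |b.radius * χ (b.vector c s + t • x)|
      = b.radius * |χ (b.vector c s + t • x)| := by rw [abs_mul, abs_of_pos hr]
    _ ≤ b.radius * (‖b.w₃‖ + ‖b.w₁‖ + t * ‖x‖) := by
      gcongr
      exact (hχ _).trans hnorm
    _ = b.radius * (‖b.w₃‖ + ‖b.w₁‖) + t * (b.radius * ‖x‖) := by ring
    _ ≤ 1 + t * τ := by linarith [b.radius_mul_le]

end BiorthPair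

namespace LongSeq

variable {X : Type u} [NormedAddCommGroup X] [NormedSpace ℝ X] {b : BiorthPair X}
  (S : LongSeq {b.w₁, b.w₃})

theorem d_vector (ξ : OmegaOne) (c s : ℝ) : S.d ξ (b.vector c s) = 0 := by
  simp [BiorthPair.vector, S.d_eq_zero]

/-- The generators of the new dual ball: the long sequence translated by `e₃`, a circle through the
limit `e₃` of this sequence, and a small ball. -/
def renormSet : Set (WeakDual ℝ X) :=
  range (fun ξ => b.e₃ + S.d ξ) ∪ {φ | ∃ c s : ℝ, c ^ 2 + s ^ 2 = 1 ∧ φ = b.functional c s} ∪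
    (fun φ => b.radius • φ) '' dualBallWrt fun x : X => ‖x‖

/-- The norm whose dual ball is generated by `S.renormSet`. -/
noncomputable def renorm : X → ℝ := supSeminorm S.renormSet

theorem exists_renormSet_subset : ∃ R : ℝ, S.renormSet ⊆ dualBallWrt fun x => R * ‖x‖ := by
  have h₃ : ∀ x, |b.e₃ x| ≤ ‖WeakDual.toStrongDual b.e₃‖ * ‖x‖ :=
    (WeakDual.toStrongDual b.e₃).le_opNorm
  have h₁ : ∀ x, |b.e₁ x| ≤ ‖WeakDual.toStrongDual b.e₁‖ * ‖x‖ :=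
    (WeakDual.toStrongDual b.e₁).le_opNorm
  set r₃ := ‖WeakDual.toStrongDual b.e₃‖
  set r₁ := ‖WeakDual.toStrongDual b.e₁‖
  have hr₃ : 0 ≤ r₃ := norm_nonneg _
  have hr₁ : 0 ≤ r₁ := norm_nonneg _
  have hr := b.radius_pos
  refine ⟨r₃ + 2 + r₁ + b.radius, ?_⟩
  rintro φ ((⟨ξ, rfl⟩ | ⟨c, s, hcs, rfl⟩) | ⟨χ, hχ, rfl⟩) x
  · calc |b.e₃ x + S.d ξ x| ≤ r₃ * ‖x‖ + 2 * ‖x‖ :=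
          (abs_add_le _ _).trans (add_le_add (h₃ x) (S.abs_d_le ξ x))
      _ = (r₃ + 2) * ‖x‖ := by ring
      _ ≤ (r₃ + 2 + r₁ + b.radius) * ‖x‖ :=
        mul_le_mul_of_nonneg_right (by linarith) (norm_nonneg x)
  · obtain ⟨hc, hs⟩ := abs_le_one_of_sq_add_sq_eq_one hcs
    calc |c * b.e₃ x + s * b.e₁ x| ≤ |c| * |b.e₃ x| + |s| * |b.e₁ x| := by
          rw [← abs_mul, ← abs_mul]
          exact abs_add_le _ _
      _ ≤ 1 * (r₃ * ‖x‖) + 1 * (r₁ * ‖x‖) := by gcongr <;> [exact h₃ x; exact h₁ x]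
      _ = (r₃ + r₁) * ‖x‖ := by ring
      _ ≤ (r₃ + 2 + r₁ + b.radius) * ‖x‖ :=
        mul_le_mul_of_nonneg_right (by linarith) (norm_nonneg x)
  · calc |b.radius * χ x| = b.radius * |χ x| := by rw [abs_mul, abs_of_pos hr]
      _ ≤ b.radius * ‖x‖ := by gcongr; exact hχ x
      _ ≤ (r₃ + 2 + r₁ + b.radius) * ‖x‖ :=
        mul_le_mul_of_nonneg_right (by linarith) (norm_nonneg x)

theorem isEquivNorm_renorm : IsEquivNorm S.renorm := by
  obtain ⟨R, hR⟩ := S.exists_renormSet_subset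
  exact isEquivNorm_supSeminorm b.radius_pos hR fun φ hφ => Or.inr ⟨φ, hφ, rfl⟩

theorem renormSet_subset : S.renormSet ⊆ dualBallWrt S.renorm := by
  obtain ⟨R, hR⟩ := S.exists_renormSet_subset
  exact fun φ hφ x => abs_le_supSeminorm hR hφ x

theorem renorm_le {x : X} {r : ℝ} (hr : 0 ≤ r) (h : ∀ φ ∈ S.renormSet, |φ x| ≤ r) :
    S.renorm x ≤ r := by
  obtain ⟨R, hR⟩ := S.exists_renormSet_subset
  exact supSeminorm_le hR hr h

theorem e₃_add_d_mem (ξ : OmegaOne) : b.e₃ + S.d ξ ∈ dualBallWrt S.renorm :=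
  S.renormSet_subset (Or.inl (Or.inl ⟨ξ, rfl⟩))

theorem functional_mem {c s : ℝ} (h : c ^ 2 + s ^ 2 = 1) :
    b.functional c s ∈ dualBallWrt S.renorm :=
  S.renormSet_subset (Or.inl (Or.inr ⟨c, s, h, rfl⟩))

theorem e₃_mem : b.e₃ ∈ dualBallWrt S.renorm :=
  b.functional_one_zero ▸ S.functional_mem (c := 1) (s := 0) (by norm_num)

variable {c s : ℝ} {x : X} {τ : ℝ}

theorem eventually_translate_le (hcs : c ^ 2 + s ^ 2 = 1) (hc : 0 < c)
    (hτ : c < 1 ∨ ∀ ξ, b.e₃ x + S.d ξ x ≤ τ) : ∀ᶠ t in 𝓝[>] (0 : ℝ), ∀ ξ,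
      |(b.e₃ + S.d ξ) (b.vector c s + t • x)| ≤ 1 + t * τ := by
  let M := |b.e₃ x| + 2 * ‖x‖
  have hupper : ∀ᶠ t in 𝓝[>] (0 : ℝ), c < 1 → c + t * (M - τ) < 1 := by
    by_cases h : c < 1
    · exact (eventually_add_mul_lt h (M - τ)).mono fun t ht _ => ht
    · exact .of_forall fun t ht => absurd ht h
  filter_upwards [self_mem_nhdsWithin, hupper,
    eventually_add_mul_lt (a := -1) (b := c) (by linarith) (M - τ)] with t (ht : 0 < t) hup hlow ξ
  have hval : (b.e₃ + S.d ξ) (b.vector c s + t • x) = c + t * (b.e₃ x + S.d ξ x) := by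
    change b.e₃ _ + S.d ξ _ = _
    simp only [map_add, map_smul, smul_eq_mul, b.e₃_vector, S.d_vector]
    ring
  have hM : |b.e₃ x + S.d ξ x| ≤ M :=
    (abs_add_le _ _).trans (add_le_add le_rfl (S.abs_d_le ξ x))
  obtain ⟨hge, hle⟩ := abs_le.1 hM
  have hge' : t * -M ≤ t * (b.e₃ x + S.d ξ x) := by gcongr
  rw [hval, abs_le]
  refine ⟨by linarith, ?_⟩
  rcases hτ with h | h
  · have hle' : t * (b.e₃ x + S.d ξ x) ≤ t * M := by gcongr
    linarith [hup h]
  · have hle' : t * (b.e₃ x + S.d ξ x) ≤ t * τ := by gcongr; exact h ξ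
    linarith [(abs_le.1 (abs_le_one_of_sq_add_sq_eq_one hcs).1).2]

theorem eventually_renorm_le (hcs : c ^ 2 + s ^ 2 = 1) (hc : 0 < c)
    (hτ : b.functional c s x ≤ τ) (hd : c < 1 ∨ ∀ ξ, b.e₃ x + S.d ξ x ≤ τ) :
    ∀ᶠ t in 𝓝[>] (0 : ℝ), S.renorm (b.vector c s + t • x) ≤
      1 + t * τ + t ^ 2 * (b.e₃ x ^ 2 + b.e₁ x ^ 2) := by
  filter_upwards [S.eventually_translate_le hcs hc hd, BiorthPair.eventually_functional_le hcs hτ,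
    BiorthPair.eventually_radius_smul_le hcs x τ] with t htrans hcircle hball
  have hA : 0 ≤ t ^ 2 * (b.e₃ x ^ 2 + b.e₁ x ^ 2) := by positivity
  refine S.renorm_le ((abs_nonneg _).trans (hcircle c s hcs)) ?_
  rintro φ ((⟨ξ, rfl⟩ | ⟨c', s', hcs', rfl⟩) | ⟨χ, hχ, rfl⟩)
  · exact (htrans ξ).trans (le_add_of_nonneg_right hA)
  · exact hcircle c' s' hcs'
  · exact (hball χ hχ).trans (le_add_of_nonneg_right hA)

theorem apply_le_of_apply_vector_eq_one {φ : WeakDual ℝ X} (hφ : φ ∈ dualBallWrt S.renorm)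
    (hcs : c ^ 2 + s ^ 2 = 1) (hc : 0 < c) (hφw : φ (b.vector c s) = 1)
    (hτ : b.functional c s x ≤ τ) (hd : c < 1 ∨ ∀ ξ, b.e₃ x + S.d ξ x ≤ τ) : φ x ≤ τ := by
  set A := b.e₃ x ^ 2 + b.e₁ x ^ 2
  have hquot : ∀ᶠ t in 𝓝[>] (0 : ℝ), φ x ≤ τ + t * A := by
    filter_upwards [self_mem_nhdsWithin, S.eventually_renorm_le hcs hc hτ hd] with t (ht : 0 < t) hN
    refine le_of_mul_le_mul_left ?_ ht
    have hval : φ (b.vector c s + t • x) = 1 + t * φ x := by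
      rw [map_add, hφw, map_smul, smul_eq_mul]
    linarith [(le_abs_self _).trans ((hφ _).trans hN)]
  have hcont : Continuous fun t : ℝ => τ + t * A := by fun_prop
  have hlim := (hcont.tendsto 0).mono_left (nhdsWithin_le_nhds (s := Ioi 0))
  simp only [zero_mul, add_zero] at hlim
  exact ge_of_tendsto hlim hquot

theorem eq_functional_of_apply_vector_eq_one {φ : WeakDual ℝ X} (hφ : φ ∈ dualBallWrt S.renorm)
    (hcs : c ^ 2 + s ^ 2 = 1) (hc : 0 < c) (hc₁ : c < 1) (hφw : φ (b.vector c s) = 1) :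
    φ = b.functional c s := by
  have hle : ∀ x, φ x ≤ b.functional c s x := fun x =>
    S.apply_le_of_apply_vector_eq_one hφ hcs hc hφw le_rfl (Or.inl hc₁)
  refine ContinuousLinearMap.ext fun x => (hle x).antisymm ?_
  simpa only [map_neg, neg_le_neg_iff] using hle (-x)

theorem apply_le_e₃ {φ : WeakDual ℝ X} (hφ : φ ∈ dualBallWrt S.renorm) (hφw : φ b.w₃ = 1)
    (hd : ∀ ξ, S.d ξ x ≤ 0) : φ x ≤ b.e₃ x :=
  S.apply_le_of_apply_vector_eq_one hφ (c := 1) (s := 0) (by norm_num) one_pos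
    (by rwa [b.vector_one_zero]) (by rw [b.functional_one_zero])
    (Or.inr fun ξ => add_le_of_nonpos_right (hd ξ))

end LongSeq

/-! ### Skeletons of the renormed dual ball -/

section Agreement

namespace RetractionalSkeleton

theorem exists_mem_inducedSet_forall_apply_eq {K : Type u} [TopologicalSpace K]
    (𝔰 : RetractionalSkeleton K) {ι : Type v} [Countable ι] {g : ι → K → ℝ}
    (hg : ∀ i, Continuous (g i)) (x : K) : ∃ y ∈ 𝔰.inducedSet, ∀ i, g i y = g i x := by
  choose s hs using fun i => 𝔰.exists_forall_ge_apply_eq (hg i) x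
  obtain ⟨t, ht⟩ := 𝔰.exists_forall_le s
  exact ⟨𝔰.r t x, mem_iUnion.2 ⟨t, x, rfl⟩, fun i => hs i t (ht i)⟩

end RetractionalSkeleton

variable {X : Type u} [NormedAddCommGroup X] [NormedSpace ℝ X] {N : X → ℝ}

theorem exists_ne_smul_of_notMem_inducedSet (𝔰 : RetractionalSkeleton (dualBallWrt N))
    {p : dualBallWrt N} (hp : p ∉ 𝔰.inducedSet) (w : X) : ∃ w', ∀ c : ℝ, w' ≠ c • w := by
  obtain ⟨q, hq, hqp⟩ :=
    𝔰.exists_mem_inducedSet_forall_apply_eq (fun _ : Unit => continuous_dualBallWrt_eval w) p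
  by_contra! h
  suffices heq : q = p from hp (heq ▸ hq)
  refine dualBallWrt_ext fun x => ?_
  obtain ⟨c, rfl⟩ := h x
  rw [map_smul, map_smul, hqp ()]

end Agreement

namespace LongSeq

variable {X : Type u} [NormedAddCommGroup X] [NormedSpace ℝ X] {b : BiorthPair X}
  (S : LongSeq {b.w₁, b.w₃})

section InducedLimit

variable (𝔱 : RetractionalSkeleton (dualBallWrt S.renorm))

theorem functional_mem_inducedSet {c s : ℝ} (hcs : c ^ 2 + s ^ 2 = 1) (hc : 0 < c)
    (hc₁ : c < 1) :
    (⟨b.functional c s, S.functional_mem hcs⟩ : dualBallWrt S.renorm) ∈ 𝔱.inducedSet := by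
  obtain ⟨ψ, hψ, hψw⟩ := 𝔱.exists_mem_inducedSet_forall_apply_eq
    (fun _ : Unit => continuous_dualBallWrt_eval (b.vector c s))
    ⟨b.functional c s, S.functional_mem hcs⟩
  have hone : (ψ : WeakDual ℝ X) (b.vector c s) = 1 := by
    rw [hψw (), b.functional_apply, b.e₃_vector, b.e₁_vector, ← hcs]
    ring
  have heq : ψ = ⟨b.functional c s, S.functional_mem hcs⟩ :=
    Subtype.ext (S.eq_functional_of_apply_vector_eq_one ψ.2 hcs hc hc₁ hone)
  exact heq ▸ hψ

theorem e₃_mem_inducedSet : (⟨b.e₃, S.e₃_mem⟩ : dualBallWrt S.renorm) ∈ 𝔱.inducedSet := by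
  let θ : ℕ → ℝ := fun k => 1 / ((k : ℝ) + 1)
  have hθ : Tendsto θ atTop (𝓝 0) := tendsto_one_div_add_atTop_nhds_zero_nat
  have hcs : ∀ k, Real.cos (θ k) ^ 2 + Real.sin (θ k) ^ 2 = 1 := fun k => Real.cos_sq_add_sin_sq _
  let y : ℕ → dualBallWrt S.renorm := fun k =>
    ⟨b.functional (Real.cos (θ k)) (Real.sin (θ k)), S.functional_mem (hcs k)⟩
  have hy : ∀ k, y k ∈ 𝔱.inducedSet := fun k => by
    have hpos : 0 < θ k := Nat.one_div_pos_of_nat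
    have hle : θ k ≤ 1 := by
      rw [div_le_one (by positivity)]
      exact le_add_of_nonneg_left (Nat.cast_nonneg k)
    exact S.functional_mem_inducedSet 𝔱 (hcs k)
      (Real.cos_pos_of_le_one (abs_le.2 ⟨by linarith, hle⟩))
      ((Real.cos_lt_cos_of_nonneg_of_le_pi le_rfl (by linarith [Real.pi_gt_three]) hpos).trans_eq
        Real.cos_zero)
  have hlim : Tendsto y atTop (𝓝 ⟨b.e₃, S.e₃_mem⟩) := by
    refine tendsto_dualBallWrt_iff.2 fun x => ?_
    have hcos := ((Real.continuous_cos.tendsto 0).comp hθ).mul_const (b.e₃ x)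
    have hsin := ((Real.continuous_sin.tendsto 0).comp hθ).mul_const (b.e₁ x)
    rw [Real.cos_zero, one_mul] at hcos
    rw [Real.sin_zero, zero_mul] at hsin
    simpa only [add_zero] using! hcos.add hsin
  obtain ⟨t, ht⟩ := 𝔱.exists_forall_closure_eq (countable_range y) (forall_mem_range.2 hy)
  exact 𝔱.mem_inducedSet.2 ⟨t, ht _ (mem_closure_of_tendsto hlim (.of_forall mem_range_self))⟩

end InducedLimit

section Agreeing

variable {φ : WeakDual ℝ X} (hφ : φ ∈ dualBallWrt S.renorm) (hφw : φ b.w₃ = 1)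
include hφ hφw

theorem apply_F_le {α l : OmegaOne} (hα : φ (S.F α) = b.e₃ (S.F α) + S.d α (S.F α))
    (hαl : α ≤ l) : φ (S.F l) ≤ b.e₃ (S.F l) - 1 / S.bound := by
  have hbound : 0 < 1 / S.bound := one_div_pos.2 (one_pos.trans_le S.one_le_bound)
  have hle := S.apply_le_e₃ hφ hφw (x := S.F l - (1 / S.bound) • S.F α) fun ξ => by
    rw [map_sub, map_smul, smul_eq_mul]
    rcases le_or_gt ξ l with h | h
    · have hsmall : -1 ≤ 1 / S.bound * S.d ξ (S.F α) := by
        rw [one_div, ← div_eq_inv_mul, le_div_iff₀ (one_pos.trans_le S.one_le_bound)]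
        linarith [(abs_le.1 (S.abs_d_F_le ξ α)).1]
      linarith [S.d_F_le_neg_one ξ l h]
    · simp [S.d_F_eq_zero ξ l h, S.d_F_eq_zero ξ α (hαl.trans_lt h)]
  simp only [map_sub, map_smul, smul_eq_mul] at hle
  have hdiag := mul_le_mul_of_nonneg_left (S.d_F_le_neg_one α α le_rfl) hbound.le
  rw [hα] at hle
  linarith

theorem apply_eq_e₃ {η : OmegaOne} (hη : φ (S.F η) = b.e₃ (S.F η)) {x : X}
    (hx : ∀ ξ, η ≤ ξ → S.d ξ x = 0) : φ x = b.e₃ x := by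
  have hle : ∀ y : X, (∀ ξ, η ≤ ξ → S.d ξ y = 0) → φ y ≤ b.e₃ y := by
    intro y hy
    have h := S.apply_le_e₃ hφ hφw (x := y + (2 * ‖y‖) • S.F η) fun ξ => by
      rw [map_add, map_smul, smul_eq_mul]
      rcases le_or_gt ξ η with h | h
      · have hneg := mul_le_mul_of_nonneg_left (S.d_F_le_neg_one ξ η h)
          (by positivity : 0 ≤ 2 * ‖y‖)
        linarith [(abs_le.1 (S.abs_d_le ξ y)).2]
      · simp [hy ξ h.le, S.d_F_eq_zero ξ η h]
    simpa [hη] using h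
  refine (hle x hx).antisymm ?_
  simpa using hle (-x) fun ξ hξ => by rw [map_neg, hx ξ hξ, neg_zero]

end Agreeing

theorem exists_mem_inducedSet_agreeing (𝔱 : RetractionalSkeleton (dualBallWrt S.renorm))
    (α : OmegaOne) : ∃ z ∈ 𝔱.inducedSet, (z : WeakDual ℝ X) b.w₃ = 1 ∧
      ∀ η ≤ α, (z : WeakDual ℝ X) (S.F η) = b.e₃ (S.F η) + S.d α (S.F η) := by
  have := (OmegaOne.countable_Iic α).to_subtype
  obtain ⟨z, hz, hzα⟩ := 𝔱.exists_mem_inducedSet_forall_apply_eq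
    (fun o : Option (Iic α) => continuous_dualBallWrt_eval (o.elim b.w₃ fun η => S.F η))
    ⟨b.e₃ + S.d α, S.e₃_add_d_mem α⟩
  refine ⟨z, hz, (hzα none).trans ?_, fun η hη => hzα (some ⟨η, hη⟩)⟩
  change b.e₃ b.w₃ + S.d α b.w₃ = 1
  rw [b.e₃_w₃, S.d_eq_zero _ (by simp), add_zero]

/-- The limit `e₃` would be induced and in the closure of a long sequence of induced points, without
being in the closure of any countable part of this sequence. -/
theorem not_hasRetractionalSkeleton_renorm : ¬ HasRetractionalSkeleton (dualBallWrt S.renorm) := by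
  rintro ⟨𝔱⟩
  have := compactSpace_dualBallWrt S.isEquivNorm_renorm
  choose z hz hzw hzF using S.exists_mem_inducedSet_agreeing 𝔱
  have hlim : Tendsto z atTop (𝓝 ⟨b.e₃, S.e₃_mem⟩) := by
    refine tendsto_dualBallWrt_iff.2 fun x => ?_
    obtain ⟨η, hη⟩ := S.eventually_zero x
    obtain ⟨η', hη'⟩ := OmegaOne.exists_gt_of_countable (countable_singleton η)
    refine tendsto_const_nhds.congr' ((eventually_ge_atTop η').mono fun α hα => ?_)
    have hηα : η < α := (hη' η rfl).trans_le hα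
    refine (S.apply_eq_e₃ (z α).2 (hzw α) ?_ hη).symm
    rw [hzF α η hηα.le, S.d_F_eq_zero α η hηα, add_zero]
  obtain ⟨C, hCz, hC, hmem⟩ := 𝔱.exists_countable_mem_closure (S.e₃_mem_inducedSet 𝔱)
    (forall_mem_range.2 hz) (mem_closure_of_tendsto hlim (.of_forall mem_range_self))
  choose! ξ hξ using show ∀ φ ∈ C, ∃ α, z α = φ from hCz
  obtain ⟨l, hl⟩ := OmegaOne.exists_gt_of_countable (hC.image ξ)
  have hgap : ∀ φ ∈ C, (φ : WeakDual ℝ X) (S.F l) ≤ b.e₃ (S.F l) - 1 / S.bound := fun φ hφ => by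
    have h := S.apply_F_le (z (ξ φ)).2 (hzw _) (hzF _ _ le_rfl) (hl _ (mem_image_of_mem ξ hφ)).le
    rwa [hξ φ hφ] at h
  have hle : b.e₃ (S.F l) ≤ b.e₃ (S.F l) - 1 / S.bound :=
    closure_minimal hgap (isClosed_le (continuous_dualBallWrt_eval _) continuous_const) hmem
  have hbound : 0 < 1 / S.bound := one_div_pos.2 (one_pos.trans_le S.one_le_bound)
  linarith

end LongSeq

section Full

variable {X : Type u} [NormedAddCommGroup X] [NormedSpace ℝ X]

theorem mem_inducedSet_of_forall_hasRetractionalSkeleton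
    (h : ∀ N : X → ℝ, IsEquivNorm N → HasRetractionalSkeleton (dualBallWrt N))
    (𝔰 : RetractionalSkeleton (dualBallWrt fun x : X => ‖x‖)) (p : dualBallWrt fun x : X => ‖x‖) :
    p ∈ 𝔰.inducedSet := by
  by_contra hp
  obtain ⟨b⟩ :=
    BiorthPair.nonempty_of_forall_exists_ne_smul (exists_ne_smul_of_notMem_inducedSet 𝔰 hp)
  obtain ⟨S⟩ := nonempty_longSeq_of_notMem_inducedSet hp
    ((countable_singleton b.w₃).insert b.w₁)
  exact S.not_hasRetractionalSkeleton_renorm (h _ S.isEquivNorm_renorm)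

end Full

/-- For a Banach space `(X, ‖·‖)`, the following are equivalent:
(i) the dual unit ball `(B_{X*}, w*)` is Corson compact;
(ii) for every equivalent norm `N` on `X`, `(X, N)` has a 1-projectional skeleton;
(iii) for every equivalent norm `N` on `X`, the dual unit ball of `(X, N)` with the
weak* topology has a retractional skeleton. -/
theorem dualBall_corson_tfae (X : Type u) [NormedAddCommGroup X] [NormedSpace ℝ X]
    [CompleteSpace X] :
    List.TFAE [
      IsCorsonCompact ↥(dualBall X),
      ∀ N : X → ℝ, IsEquivNorm N → Has1ProjectionalSkeletonWrt N,
      ∀ N : X → ℝ, IsEquivNorm N → HasRetractionalSkeleton ↥(dualBallWrt N)] := by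
  tfae_have 1 → 2 := fun h _ hN => has1ProjectionalSkeletonWrt_of_corson h hN
  tfae_have 2 → 3 := fun h N hN =>
    hasRetractionalSkeleton_of_has1ProjectionalSkeletonWrt hN (h N hN)
  tfae_have 3 → 1 := fun h => by
    obtain ⟨𝔰⟩ := h _ isEquivNorm_norm
    exact isCorsonCompact_of_full isEquivNorm_norm 𝔰
      (mem_inducedSet_of_forall_hasRetractionalSkeleton h 𝔰)
  tfae_finish
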